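/- There exists a constant C > 0 such that for all real x ≥ 16, |Σ_{n ≤ x} μ(n) ω(n) {x/n}| ≤ C · x · √(log log x) / √(log x), where {y} = y − ⌊y⌋ denotes the fractional part and the sum runs over positive integers n ≤ x. -/

import Mathlib

open Finset ArithmeticFunction Real

/-!
Since `μ ω * 1 = -1_P`, with `P` the set of prime powers, the sum over `n ≤ x` equals
`#{q ∈ P, q ≤ x} - x ∑_{q ∈ P, q ≤ x} A(x / q) / q`, where `A(y) = ∑_{n ≤ y} μ(n) / n`. Chebyshev's
estimate bounds the number of prime powers by `O(x / log x)`, so any bound `A(y) ≪ (log y) ^ (-α)`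
with `1 / 2 < α ≤ 1` suffices: cutting the sum over `q` according to `⌊log (x / q)⌋` loses only a
factor `log log x`.

The exponent `α = 2 / 3` comes from Plancherel's theorem. The inequality `3 + 4 cos θ + cos 2θ ≥ 0`
gives a lower bound for `Z(s) = (s - 1) ζ(s)` strong enough to make `Z' / Z ^ 2` square integrable
on the lines `Re s = 1 + σ`, uniformly in `0 < σ ≤ 1`. As `Z' / Z ^ 2` is, up to sign, the
Fourier-Laplace transform of `u A(e ^ u)`, that function is in `L²(0, ∞)`; since `A(e ^ u)` is
Lipschitz in `u`, up to a negligible error, its square integrability forces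
`u ^ 2 |A(e ^ u)| ^ 3 ≪ 1`.
-/

open Filter Topology MeasureTheory

section SumIntegralComparison

variable {E : Type*} [NormedAddCommGroup E]

lemma norm_le_add_tsum_of_norm_sub_sub_le {F f : ℕ → E} {c : ℕ → ℝ} {L : E}
    (h : ∀ n, ‖F (n + 1) - F n - f n‖ ≤ c n) (hc : Summable c) (hF : Tendsto F atTop (𝓝 0))
    (hf : HasSum f L) : ‖L‖ ≤ ‖F 0‖ + ∑' n, c n := by
  have partial_le (N : ℕ) : ‖∑ n ∈ range N, f n‖ ≤ ‖F N‖ + (‖F 0‖ + ∑' n, c n) := by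
    have hsum : ∑ n ∈ range N, f n = F N - F 0 - ∑ n ∈ range N, (F (n + 1) - F n - f n) := by
      rw [sum_sub_distrib, sum_range_sub]
      abel
    calc ‖∑ n ∈ range N, f n‖ ≤ ‖F N‖ + ‖F 0‖ + ‖∑ n ∈ range N, (F (n + 1) - F n - f n)‖ := by
          rw [hsum]
          exact (norm_sub_le _ _).trans (by gcongr; exact norm_sub_le _ _)
      _ ≤ ‖F N‖ + ‖F 0‖ + ∑' n, c n := by
          gcongr
          exact (norm_sum_le_of_le _ fun n _ ↦ h n).trans
            (hc.sum_le_tsum _ fun n _ ↦ (norm_nonneg _).trans (h n))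
      _ = ‖F N‖ + (‖F 0‖ + ∑' n, c n) := add_assoc _ _ _
  simpa using le_of_tendsto_of_tendsto' hf.tendsto_sum_nat.norm
    (hF.norm.add_const (‖F 0‖ + ∑' n, c n)) partial_le

variable [NormedSpace ℝ E]

lemma norm_sub_sub_le_of_hasDerivAt {F f : ℝ → E} {a M : ℝ}
    (hF : ∀ u ∈ Set.Icc a (a + 1), HasDerivAt F (f u) u)
    (hM : ∀ u ∈ Set.Icc a (a + 1), ‖f u - f a‖ ≤ M) :
    ‖F (a + 1) - F a - f a‖ ≤ M := by
  have h := norm_image_sub_le_of_norm_deriv_le_segment' (f := fun u ↦ F u - u • f a)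
    (f' := fun u ↦ f u - f a) (fun u hu ↦ ?_) (fun u hu ↦ hM u (Set.Ico_subset_Icc_self hu))
    (a + 1) (Set.right_mem_Icc.2 (by linarith))
  · rw [add_sub_cancel_left, mul_one] at h
    convert! h using 2
    module
  · simpa [Pi.sub_def] using
      ((hF u hu).sub ((hasDerivAt_id u).smul_const (f a))).hasDerivWithinAt

lemma norm_sub_le_of_norm_deriv_le_of_mem_Icc {f f' : ℝ → E} {a D : ℝ}
    (hf : ∀ u ∈ Set.Icc a (a + 1), HasDerivAt f (f' u) u)
    (hD : ∀ u ∈ Set.Icc a (a + 1), ‖f' u‖ ≤ D) {u : ℝ} (hu : u ∈ Set.Icc a (a + 1)) :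
    ‖f u - f a‖ ≤ D :=
  calc ‖f u - f a‖ ≤ D * (u - a) :=
        norm_image_sub_le_of_norm_deriv_le_segment' (fun v hv ↦ (hf v hv).hasDerivWithinAt)
          (fun v hv ↦ hD v (Set.Ico_subset_Icc_self hv)) u hu
    _ ≤ D := mul_le_of_le_one_right ((norm_nonneg _).trans (hD u hu)) (by linarith [hu.2])

lemma min_one_le_rpow {y ε : ℝ} (hy : 0 ≤ y) (hε : 0 ≤ ε) (hε1 : ε ≤ 1) : min 1 y ≤ y ^ ε := by
  rcases le_total y 1 with h | h
  · simpa [h] using rpow_le_rpow_of_exponent_ge' hy h hε hε1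
  · simpa [h] using one_le_rpow h hε

lemma summable_one_add_log_div_rpow {ε : ℝ} (hε : 0 < ε) :
    Summable fun n : ℕ ↦ (1 + Real.log (n + 2)) / (n + 1 : ℝ) ^ (1 + ε) := by
  have hs : Summable fun n : ℕ ↦ 1 / (n + 1 : ℝ) ^ (1 + ε / 2) := by
    simpa using (summable_nat_add_iff 1).2
      (summable_one_div_nat_rpow.2 (by linarith : 1 < 1 + ε / 2))
  refine .of_nonneg_of_le (fun n ↦ ?_) (fun n ↦ ?_) (hs.mul_left (2 + 2 / ε))
  · have := log_nonneg (by linarith [n.cast_nonneg (α := ℝ)] : (1 : ℝ) ≤ n + 2)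
    positivity
  have hn : (1 : ℝ) ≤ n + 1 := by simp
  have hlog : 1 + Real.log (n + 2) ≤ (2 + 2 / ε) * (n + 1 : ℝ) ^ (ε / 2) := by
    have log_le : Real.log (n + 2) ≤ Real.log 2 + Real.log (n + 1) := by
      rw [← log_mul (by simp) (by positivity)]
      exact log_le_log (by positivity) (by linarith)
    have log_le_rpow : Real.log (n + 1) ≤ (n + 1 : ℝ) ^ (ε / 2) / (ε / 2) :=
      log_le_rpow_div (by positivity) (by positivity)
    have one_le : 1 ≤ (n + 1 : ℝ) ^ (ε / 2) := one_le_rpow hn (by positivity)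
    calc 1 + Real.log (n + 2) ≤ 2 + (n + 1 : ℝ) ^ (ε / 2) / (ε / 2) := by linarith [log_two_lt_d9]
      _ ≤ 2 * (n + 1 : ℝ) ^ (ε / 2) + (n + 1 : ℝ) ^ (ε / 2) / (ε / 2) := by linarith
      _ = (2 + 2 / ε) * (n + 1 : ℝ) ^ (ε / 2) := by field_simp
  calc (1 + Real.log (n + 2)) / (n + 1 : ℝ) ^ (1 + ε)
      ≤ (2 + 2 / ε) * (n + 1 : ℝ) ^ (ε / 2) / (n + 1 : ℝ) ^ (1 + ε) := by gcongr
    _ = (2 + 2 / ε) * (1 / (n + 1 : ℝ) ^ (1 + ε / 2)) := by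
        rw [show 1 + ε = (1 + ε / 2) + ε / 2 by ring, rpow_add (by positivity)]
        field_simp

lemma norm_sub_sub_le_mul_rpow {F f f' : ℝ → E} {S ε a : ℝ} (hS : 0 ≤ S) (hε : 0 ≤ ε)
    (hε1 : ε ≤ 1) (ha : 1 ≤ a)
    (hF : ∀ u, 1 ≤ u → HasDerivAt F (f u) u) (hf : ∀ u, 1 ≤ u → HasDerivAt f (f' u) u)
    (hfb : ∀ u, 1 ≤ u → ‖f u‖ ≤ (1 + Real.log u) / u)
    (hfb' : ∀ u, 1 ≤ u → ‖f' u‖ ≤ S * (1 + Real.log u) / u ^ 2) :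
    ‖F (a + 1) - F a - f a‖ ≤ 2 * S ^ ε * ((1 + Real.log (a + 1)) / a ^ (1 + ε)) := by
  have ha0 : 0 < a := by linarith
  set b := (1 + Real.log (a + 1)) / a with hb
  have hlog : 0 ≤ 1 + Real.log (a + 1) := by linarith [log_nonneg (by linarith : 1 ≤ a + 1)]
  have : 0 ≤ b := div_nonneg hlog ha0.le
  have one_le {u : ℝ} (hu : u ∈ Set.Icc a (a + 1)) : 1 ≤ u := ha.trans hu.1
  have trivial_bound (u : ℝ) (hu : u ∈ Set.Icc a (a + 1)) : ‖f u‖ ≤ b :=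
    (hfb u (one_le hu)).trans
      (div_le_div₀ hlog (by linarith [log_le_log (by linarith [one_le hu]) hu.2]) ha0 hu.1)
  have deriv_bound (u : ℝ) (hu : u ∈ Set.Icc a (a + 1)) : ‖f' u‖ ≤ b * (S / a) := by
    have u_pos : 0 < u := by linarith [one_le hu]
    calc ‖f' u‖ ≤ S * (1 + Real.log u) / u ^ 2 := hfb' u (one_le hu)
      _ ≤ S * (1 + Real.log (a + 1)) / a ^ 2 := by gcongr <;> linarith [hu.1, hu.2]
      _ = b * (S / a) := by rw [hb]; field_simp
  have osc (u : ℝ) (hu : u ∈ Set.Icc a (a + 1)) : ‖f u - f a‖ ≤ 2 * b * min 1 (S / a) := by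
    rw [mul_min_of_nonneg _ _ (by positivity), mul_one]
    refine le_min ?_ ?_
    · linarith [norm_sub_le (f u) (f a), trivial_bound u hu,
        trivial_bound a ⟨le_rfl, by linarith⟩]
    · have := norm_sub_le_of_norm_deriv_le_of_mem_Icc (fun v hv ↦ hf v (one_le hv)) deriv_bound hu
      linarith [(norm_nonneg _).trans this]
  calc ‖F (a + 1) - F a - f a‖ ≤ 2 * b * min 1 (S / a) :=
        norm_sub_sub_le_of_hasDerivAt (fun u hu ↦ hF u (one_le hu)) osc
    _ ≤ 2 * b * (S / a) ^ ε := by gcongr; exact min_one_le_rpow (by positivity) hε hε1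
    _ = 2 * S ^ ε * ((1 + Real.log (a + 1)) / a ^ (1 + ε)) := by
        rw [hb, div_rpow hS ha0.le, rpow_add ha0, rpow_one]
        field_simp

lemma exists_norm_hasSum_le_of_antideriv {ε : ℝ} (hε : 0 < ε) (hε1 : ε ≤ 1) :
    ∃ K : ℝ, 0 ≤ K ∧ ∀ (F f f' : ℝ → E) (L : E) (S : ℝ), 0 ≤ S →
      (∀ u, 1 ≤ u → HasDerivAt F (f u) u) → (∀ u, 1 ≤ u → HasDerivAt f (f' u) u) →
      (∀ u, 1 ≤ u → ‖f u‖ ≤ (1 + Real.log u) / u) →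
      (∀ u, 1 ≤ u → ‖f' u‖ ≤ S * (1 + Real.log u) / u ^ 2) →
      Tendsto F atTop (𝓝 0) → HasSum (fun n : ℕ ↦ f (n + 1)) L → ‖L‖ ≤ ‖F 1‖ + K * S ^ ε := by
  refine ⟨2 * ∑' n : ℕ, (1 + Real.log (n + 2)) / (n + 1 : ℝ) ^ (1 + ε), ?_, ?_⟩
  · refine mul_nonneg zero_le_two (tsum_nonneg fun n ↦ ?_)
    have := log_nonneg (by linarith [n.cast_nonneg (α := ℝ)] : (1 : ℝ) ≤ n + 2)
    positivity
  intro F f f' L S hS hF hf hfb hfb' hlim hL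
  have step (n : ℕ) : ‖F ((n + 1 : ℕ) + 1) - F (n + 1) - f (n + 1)‖ ≤
      2 * S ^ ε * ((1 + Real.log (n + 2)) / (n + 1 : ℝ) ^ (1 + ε)) := by
    convert! norm_sub_sub_le_mul_rpow hS hε.le hε1 (by simp : (1 : ℝ) ≤ n + 1) hF hf hfb hfb'
      using 5
    · push_cast; rfl
    · ring_nf
  have := norm_le_add_tsum_of_norm_sub_sub_le (F := fun n : ℕ ↦ F (n + 1)) step
    ((summable_one_add_log_div_rpow hε).mul_left _)
    (hlim.comp (tendsto_atTop_add_const_right _ 1 tendsto_natCast_atTop_atTop)) hL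
  rw [tsum_mul_left] at this
  calc ‖L‖ ≤ _ := this
    _ = _ := by simp; ring

end SumIntegralComparison

section ZetaUpperBound

lemma norm_ofReal_cpow_neg_le_one_div {s : ℂ} (hs : 1 ≤ s.re) {u : ℝ} (hu : 1 ≤ u) :
    ‖(u : ℂ) ^ (-s)‖ ≤ 1 / u := by
  rw [Complex.norm_cpow_eq_rpow_re_of_pos (by linarith), one_div, ← rpow_neg_one]
  exact rpow_le_rpow_of_exponent_le hu (by simpa using hs)

lemma norm_ofReal_cpow_neg_sub_one_le {s : ℂ} (hs : 1 ≤ s.re) {u : ℝ} (hu : 1 ≤ u) :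
    ‖(u : ℂ) ^ (-s - 1)‖ ≤ 1 / u ^ 2 := by
  have hu0 : (u : ℂ) ≠ 0 := by exact_mod_cast (by linarith : u ≠ 0)
  rw [Complex.cpow_sub _ _ hu0, Complex.cpow_one, norm_div, Complex.norm_real,
    norm_of_nonneg (by linarith), sq, ← div_div]
  gcongr
  exact norm_ofReal_cpow_neg_le_one_div hs hu

lemma tendsto_ofReal_cpow_one_sub_atTop {s : ℂ} (hs : 1 < s.re) :
    Tendsto (fun u : ℝ ↦ (u : ℂ) ^ (1 - s)) atTop (𝓝 0) := by
  refine tendsto_zero_iff_norm_tendsto_zero.2 ?_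
  refine (tendsto_rpow_neg_atTop (by linarith : 0 < s.re - 1)).congr' ?_
  filter_upwards [eventually_gt_atTop 0] with u hu
  simp [Complex.norm_cpow_eq_rpow_re_of_pos hu]

lemma tendsto_log_mul_cpow_one_sub_atTop {s : ℂ} (hs : 1 < s.re) :
    Tendsto (fun u : ℝ ↦ (Real.log u : ℂ) * (u : ℂ) ^ (1 - s)) atTop (𝓝 0) := by
  refine tendsto_zero_iff_norm_tendsto_zero.2 ?_
  have h := (isLittleO_log_rpow_atTop (by linarith : 0 < s.re - 1)).tendsto_div_nhds_zero.norm
  rw [norm_zero] at h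
  refine h.congr' ?_
  filter_upwards [eventually_gt_atTop 0] with u hu
  rw [norm_mul, Complex.norm_cpow_eq_rpow_re_of_pos hu, norm_div, Complex.norm_real,
    norm_of_nonneg (rpow_nonneg hu.le (s.re - 1)), div_eq_mul_inv, ← rpow_neg hu.le]
  simp

lemma hasDerivAt_ofReal_log {u : ℝ} (hu : u ≠ 0) :
    HasDerivAt (fun y : ℝ ↦ (Real.log y : ℂ)) (u : ℂ)⁻¹ u := by
  simpa using (Real.hasDerivAt_log hu).ofReal_comp

lemma hasSum_cpow_neg_riemannZeta {s : ℂ} (hs : 1 < s.re) :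
    HasSum (fun n : ℕ ↦ (((n + 1 : ℝ) : ℂ)) ^ (-s)) (riemannZeta s) := by
  have h : Summable fun n : ℕ ↦ 1 / (n + 1 : ℂ) ^ s := by
    simpa using (summable_nat_add_iff 1).2 (Complex.summable_one_div_nat_cpow.2 hs)
  rw [zeta_eq_tsum_one_div_nat_add_one_cpow hs]
  simpa [Complex.cpow_neg] using h.hasSum

lemma hasSum_log_mul_cpow_neg_deriv_riemannZeta {s : ℂ} (hs : 1 < s.re) :
    HasSum (fun n : ℕ ↦ (Real.log (n + 1) : ℂ) * (((n + 1 : ℝ) : ℂ)) ^ (-s))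
      (-deriv riemannZeta s) := by
  have abscissa_lt : LSeries.abscissaOfAbsConv 1 < s.re := by
    rw [LSeries.abscissaOfAbsConv_one]
    exact_mod_cast hs
  have deriv_eq : -deriv riemannZeta s = LSeries (LSeries.logMul 1) s := by
    rw [← neg_eq_iff_eq_neg.2 (LSeries_deriv abscissa_lt)]
    congr 1
    refine EventuallyEq.deriv_eq ?_
    filter_upwards [(isOpen_lt continuous_const Complex.continuous_re).mem_nhds hs] with z hz
    exact (LSeries_one_eq_riemannZeta hz).symm
  have h := (hasSum_nat_add_iff' 1).2 (LSeriesSummable_logMul_of_lt_re abscissa_lt).LSeriesHasSum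
  simp only [range_one, sum_singleton, LSeries.term_zero, sub_zero] at h
  rw [deriv_eq]
  convert! h using 2 with n
  rw [LSeries.term_of_ne_zero n.succ_ne_zero, LSeries.logMul, Pi.one_apply, mul_one,
    ← Complex.natCast_log, Complex.cpow_neg, ← div_eq_mul_inv]
  push_cast
  rfl

lemma one_le_norm_one_sub {s : ℂ} (hi : 1 ≤ |s.im|) : 1 ≤ ‖1 - s‖ :=
  hi.trans (by simpa using Complex.abs_im_le_norm (1 - s))

lemma ne_zero_of_one_le_norm {z : ℂ} (hz : 1 ≤ ‖z‖) : z ≠ 0 :=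
  norm_pos_iff.1 (one_pos.trans_le hz)

lemma exists_norm_riemannZeta_le {ε : ℝ} (hε : 0 < ε) (hε1 : ε ≤ 1) :
    ∃ K : ℝ, 0 ≤ K ∧ ∀ s : ℂ, 1 < s.re → 1 ≤ |s.im| → ‖riemannZeta s‖ ≤ 1 + K * ‖s‖ ^ ε := by
  obtain ⟨K, hK, hbound⟩ := exists_norm_hasSum_le_of_antideriv (E := ℂ) hε hε1
  refine ⟨K, hK, fun s hs hi ↦ ?_⟩
  have norm_one_sub := one_le_norm_one_sub hi
  have hs1 : 1 - s ≠ 0 := ne_zero_of_one_le_norm norm_one_sub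
  have hs0 : -s ≠ 0 := neg_ne_zero.2 (ne_zero_of_one_le_norm (hi.trans s.abs_im_le_norm))
  calc ‖riemannZeta s‖
      ≤ ‖((1 : ℝ) : ℂ) ^ (1 - s) / (1 - s)‖ + K * ‖s‖ ^ ε :=
        hbound (fun u ↦ (u : ℂ) ^ (1 - s) / (1 - s)) (fun u ↦ (u : ℂ) ^ (-s))
          (fun u ↦ -s * (u : ℂ) ^ (-s - 1)) _ _ (norm_nonneg s) (fun u hu ↦ ?_) (fun u hu ↦ ?_)
          (fun u hu ↦ ?_) (fun u hu ↦ ?_)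
          (by simpa using (tendsto_ofReal_cpow_one_sub_atTop hs).div_const (1 - s))
          (by simpa using hasSum_cpow_neg_riemannZeta hs)
    _ ≤ 1 + K * ‖s‖ ^ ε := by
        gcongr
        simpa using inv_le_one_of_one_le₀ norm_one_sub
  · refine ((hasDerivAt_ofReal_cpow_const (by linarith) hs1).div_const (1 - s)).congr_deriv ?_
    rw [mul_div_cancel_left₀ _ hs1, sub_sub_cancel_left]
  · exact hasDerivAt_ofReal_cpow_const (by linarith) hs0
  · refine (norm_ofReal_cpow_neg_le_one_div hs.le hu).trans ?_
    gcongr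
    linarith [log_nonneg hu]
  · rw [norm_mul, norm_neg, mul_div_assoc]
    gcongr
    refine (norm_ofReal_cpow_neg_sub_one_le hs.le hu).trans ?_
    gcongr
    linarith [log_nonneg hu]

lemma hasDerivAt_log_mul_cpow_div {s : ℂ} (hs : 1 - s ≠ 0) {u : ℝ} (hu : u ≠ 0) :
    HasDerivAt (fun v : ℝ ↦ (Real.log v : ℂ) * (v : ℂ) ^ (1 - s) / (1 - s)
      - (v : ℂ) ^ (1 - s) / (1 - s) ^ 2) ((Real.log u : ℂ) * (u : ℂ) ^ (-s)) u := by
  have hu0 : (u : ℂ) ≠ 0 := by exact_mod_cast hu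
  have hpow := hasDerivAt_ofReal_cpow_const hu hs
  refine ((((hasDerivAt_ofReal_log hu).mul hpow).div_const (1 - s)).sub
    (hpow.div_const ((1 - s) ^ 2))).congr_deriv ?_
  rw [sub_sub_cancel_left, sub_eq_neg_add 1 s, Complex.cpow_add _ _ hu0, Complex.cpow_one]
  rw [sub_eq_neg_add] at hs
  field_simp
  ring

lemma hasDerivAt_log_mul_cpow_neg {s : ℂ} (hs : s ≠ 0) {u : ℝ} (hu : u ≠ 0) :
    HasDerivAt (fun v : ℝ ↦ (Real.log v : ℂ) * (v : ℂ) ^ (-s))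
      ((u : ℂ) ^ (-s - 1) * (1 - s * (Real.log u : ℂ))) u := by
  have hu0 : (u : ℂ) ≠ 0 := by exact_mod_cast hu
  refine ((hasDerivAt_ofReal_log hu).mul
    (hasDerivAt_ofReal_cpow_const hu (neg_ne_zero.2 hs))).congr_deriv ?_
  rw [Complex.cpow_sub _ _ hu0, Complex.cpow_one]
  field_simp
  ring

lemma norm_ofReal_log {u : ℝ} (hu : 1 ≤ u) : ‖(Real.log u : ℂ)‖ = Real.log u := by
  rw [Complex.norm_real, norm_of_nonneg (log_nonneg hu)]

lemma norm_log_mul_cpow_neg_le {s : ℂ} (hs : 1 ≤ s.re) {u : ℝ} (hu : 1 ≤ u) :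
    ‖(Real.log u : ℂ) * (u : ℂ) ^ (-s)‖ ≤ (1 + Real.log u) / u := by
  rw [norm_mul, norm_ofReal_log hu]
  calc Real.log u * ‖(u : ℂ) ^ (-s)‖ ≤ (1 + Real.log u) * (1 / u) := by
        gcongr
        · linarith [log_nonneg hu]
        · linarith
        · exact norm_ofReal_cpow_neg_le_one_div hs hu
    _ = (1 + Real.log u) / u := mul_one_div _ _

lemma norm_deriv_log_mul_cpow_neg_le {s : ℂ} (hs : 1 ≤ s.re) {u : ℝ} (hu : 1 ≤ u) :
    ‖(u : ℂ) ^ (-s - 1) * (1 - s * (Real.log u : ℂ))‖ ≤ ‖s‖ * (1 + Real.log u) / u ^ 2 := by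
  have norm_s : 1 ≤ ‖s‖ := hs.trans ((le_abs_self _).trans s.abs_re_le_norm)
  rw [norm_mul]
  calc ‖(u : ℂ) ^ (-s - 1)‖ * ‖1 - s * (Real.log u : ℂ)‖
      ≤ (1 / u ^ 2) * (1 + ‖s‖ * Real.log u) := by
        gcongr
        · exact norm_ofReal_cpow_neg_sub_one_le hs hu
        · exact (norm_sub_le _ _).trans (by rw [norm_one, norm_mul, norm_ofReal_log hu])
    _ ≤ (1 / u ^ 2) * (‖s‖ * (1 + Real.log u)) := by gcongr; linarith
    _ = ‖s‖ * (1 + Real.log u) / u ^ 2 := by ring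

lemma exists_norm_deriv_riemannZeta_le {ε : ℝ} (hε : 0 < ε) (hε1 : ε ≤ 1) :
    ∃ K : ℝ, 0 ≤ K ∧ ∀ s : ℂ, 1 < s.re → 1 ≤ |s.im| →
      ‖deriv riemannZeta s‖ ≤ 1 + K * ‖s‖ ^ ε := by
  obtain ⟨K, hK, hbound⟩ := exists_norm_hasSum_le_of_antideriv (E := ℂ) hε hε1
  refine ⟨K, hK, fun s hs hi ↦ ?_⟩
  have norm_one_sub := one_le_norm_one_sub hi
  have hs1 : 1 - s ≠ 0 := ne_zero_of_one_le_norm norm_one_sub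
  have hs0 : s ≠ 0 := ne_zero_of_one_le_norm (hi.trans s.abs_im_le_norm)
  have hlim := ((tendsto_log_mul_cpow_one_sub_atTop hs).div_const (1 - s)).sub
    ((tendsto_ofReal_cpow_one_sub_atTop hs).div_const ((1 - s) ^ 2))
  simp only [zero_div, sub_zero] at hlim
  rw [← norm_neg]
  refine (hbound _ _ _ _ ‖s‖ (norm_nonneg s)
    (fun u hu ↦ hasDerivAt_log_mul_cpow_div hs1 (by linarith))
    (fun u hu ↦ hasDerivAt_log_mul_cpow_neg hs0 (by linarith))
    (fun u hu ↦ norm_log_mul_cpow_neg_le hs.le hu)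
    (fun u hu ↦ norm_deriv_log_mul_cpow_neg_le hs.le hu) hlim
    (hasSum_log_mul_cpow_neg_deriv_riemannZeta hs)).trans ?_
  gcongr
  simpa using inv_le_one_of_one_le₀ (one_le_pow₀ norm_one_sub (n := 2))

lemma exists_norm_riemannZeta_and_deriv_le {ε : ℝ} (hε : 0 < ε) (hε1 : ε ≤ 1) :
    ∃ K : ℝ, 1 ≤ K ∧ ∀ s : ℂ, 1 < s.re → s.re ≤ 2 → 1 ≤ |s.im| →
      ‖riemannZeta s‖ ≤ K * (1 + |s.im|) ^ ε ∧ ‖deriv riemannZeta s‖ ≤ K * (1 + |s.im|) ^ ε := by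
  obtain ⟨K₀, hK₀, zeta_le⟩ := exists_norm_riemannZeta_le hε hε1
  obtain ⟨K₁, hK₁, deriv_le⟩ := exists_norm_deriv_riemannZeta_le hε hε1
  refine ⟨1 + 2 * (K₀ + K₁), by linarith, fun s hre hre2 him ↦ ?_⟩
  have one_le : 1 ≤ (1 + |s.im|) ^ ε := one_le_rpow (by linarith) hε.le
  have norm_s : ‖s‖ ^ ε ≤ 2 * (1 + |s.im|) ^ ε :=
    calc ‖s‖ ^ ε ≤ (2 * (1 + |s.im|)) ^ ε := by
          gcongr
          have := s.norm_le_abs_re_add_abs_im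
          rw [abs_of_pos (by linarith : 0 < s.re)] at this
          linarith
      _ = 2 ^ ε * (1 + |s.im|) ^ ε := mul_rpow zero_le_two (by linarith)
      _ ≤ 2 * (1 + |s.im|) ^ ε := by
          gcongr
          exact rpow_le_self_of_one_le one_le_two hε1
  constructor
  · nlinarith [zeta_le s hre him]
  · nlinarith [deriv_le s hre him]

end ZetaUpperBound

section ZetaLowerBound

lemma exists_norm_riemannZeta_one_add_ofReal_le :
    ∃ K : ℝ, 1 ≤ K ∧ ∀ x ∈ Set.Ioc (0 : ℝ) 1, ‖riemannZeta (1 + x)‖ ≤ K / x := by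
  obtain ⟨K, hK⟩ := (isCompact_Icc (a := (0 : ℝ)) (b := 1)).exists_bound_of_continuousOn
    (f := fun x : ℝ ↦ riemannZeta₁ (1 + x))
    (differentiable_riemannZeta₁.continuous.comp (by fun_prop)).continuousOn
  refine ⟨max 1 K, le_max_left _ _, fun x hx ↦ ?_⟩
  rw [riemannZeta_eq_inv_sub_mul (by simpa using hx.1.ne'), add_sub_cancel_left, norm_mul,
    norm_inv, Complex.norm_real, norm_of_nonneg hx.1.le, inv_mul_eq_div]
  have := hx.1
  gcongr
  exact (hK x (Set.Ioc_subset_Icc_self hx)).trans (le_max_right _ _)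

lemma one_le_norm_riemannZeta_product {x : ℝ} (hx : 0 < x) (t : ℝ) :
    1 ≤ ‖riemannZeta (1 + x)‖ ^ 3 * ‖riemannZeta (1 + x + Complex.I * t)‖ ^ 4 *
      ‖riemannZeta (1 + x + 2 * Complex.I * t)‖ := by
  simpa [DirichletCharacter.LFunctionTrivChar, DirichletCharacter.LFunction_modOne_eq] using
    DirichletCharacter.norm_LFunction_product_ge_one (N := 1) 1 hx t

lemma one_div_le_of_cube_le_mul_pow_four {W : ℝ → ℝ} {M : ℝ} (hM : 1 ≤ M) (hW : ∀ x, 0 ≤ W x)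
    (hcube : ∀ x ∈ Set.Ioc (0 : ℝ) 1, x ^ 3 ≤ M * W x ^ 4)
    (hlip : ∀ x ∈ Set.Ioc (0 : ℝ) 1, ∀ y ∈ Set.Ioc (0 : ℝ) 1, |W x - W y| ≤ M * |x - y|)
    {x : ℝ} (hx : x ∈ Set.Ioc (0 : ℝ) 1) : 1 / (16 * M ^ 7) ≤ W x := by
  have hM0 : 0 < M := by linarith
  set y := 1 / (2 * M ^ 2) with hy
  have hy0 : 0 < y := by positivity
  have hy1 : y ≤ 1 := by rw [hy, div_le_one (by positivity)]; nlinarith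
  have cube_div_le {z : ℝ} (hz : z ∈ Set.Ioc (0 : ℝ) 1) (hyz : y ^ 4 ≤ z) : y ^ 3 / M ≤ W z := by
    rw [div_le_iff₀ hM0]
    refine le_of_pow_le_pow_left₀ four_ne_zero (mul_nonneg (hW z) hM0.le) ?_
    calc (y ^ 3) ^ 4 = (y ^ 4) ^ 3 := by ring
      _ ≤ z ^ 3 := by gcongr
      _ ≤ M * W z ^ 4 := hcube z hz
      _ ≤ M ^ 4 * W z ^ 4 := by gcongr; exact le_self_pow₀ hM four_ne_zero
      _ = (W z * M) ^ 4 := by ring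
  have half : y ^ 3 / (2 * M) ≤ W x := by
    rcases le_total (y ^ 4) x with h | h
    · refine le_trans ?_ (cube_div_le hx h)
      gcongr
      linarith
    · have hy4 : y ^ 4 ∈ Set.Ioc (0 : ℝ) 1 := ⟨by positivity, pow_le_one₀ hy0.le hy1⟩
      have close : |W x - W (y ^ 4)| ≤ y ^ 3 / (2 * M) :=
        calc |W x - W (y ^ 4)| ≤ M * |x - y ^ 4| := hlip x hx _ hy4
          _ ≤ M * y ^ 4 := by
              gcongr
              rw [abs_le]
              constructor <;> linarith [hx.1]
          _ = y ^ 3 * (M * y) := by ring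
          _ = y ^ 3 / (2 * M) := by rw [hy]; field_simp
      have hsplit : y ^ 3 / M = y ^ 3 / (2 * M) + y ^ 3 / (2 * M) := by field_simp; ring
      linarith [(abs_le.1 close).1, cube_div_le hy4 le_rfl]
  calc 1 / (16 * M ^ 7) = y ^ 3 / (2 * M) := by rw [hy]; field_simp; norm_num
    _ ≤ W x := half

lemma abs_norm_riemannZeta_sub_le_of_norm_deriv_le {t D : ℝ}
    (hD : ∀ x ∈ Set.Ioc (0 : ℝ) 1, ‖deriv riemannZeta (1 + x + Complex.I * t)‖ ≤ D)
    {x y : ℝ} (hx : x ∈ Set.Ioc (0 : ℝ) 1) (hy : y ∈ Set.Ioc (0 : ℝ) 1) :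
    |‖riemannZeta (1 + x + Complex.I * t)‖ - ‖riemannZeta (1 + y + Complex.I * t)‖| ≤
      D * |x - y| := by
  refine (abs_norm_sub_norm_le _ _).trans ?_
  refine Convex.norm_image_sub_le_of_norm_hasDerivWithin_le
    (f := fun u : ℝ ↦ riemannZeta (1 + u + Complex.I * t))
    (fun u hu ↦ HasDerivAt.hasDerivWithinAt ?_) hD (convex_Ioc 0 1) hy hx
  have hne : (1 : ℂ) + u + Complex.I * t ≠ 1 := fun h ↦ by
    have := congrArg Complex.re h
    simp at this
    linarith [hu.1]
  have line : HasDerivAt (fun u : ℝ ↦ (1 : ℂ) + u + Complex.I * t) 1 u := by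
    simpa using ((hasDerivAt_id u).ofReal_comp.const_add (1 : ℂ)).add_const (Complex.I * t)
  simpa [Function.comp_def] using (differentiableAt_riemannZeta hne).hasDerivAt.scomp u line

lemma exists_cube_le_mul_norm_riemannZeta_pow_four {ε : ℝ} (hε : 0 < ε) (hε1 : ε ≤ 1) :
    ∃ K : ℝ, ∀ x ∈ Set.Ioc (0 : ℝ) 1, ∀ t : ℝ, 1 ≤ |t| →
      x ^ 3 ≤ K * (1 + |t|) ^ ε * ‖riemannZeta (1 + x + Complex.I * t)‖ ^ 4 := by
  obtain ⟨K, hK, zeta_le⟩ := exists_norm_riemannZeta_and_deriv_le hε hε1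
  obtain ⟨K₀, hK₀, zeta_real_le⟩ := exists_norm_riemannZeta_one_add_ofReal_le
  refine ⟨K₀ ^ 3 * (K * 2), fun x hx t ht ↦ ?_⟩
  have hx0 := hx.1
  set W := ‖riemannZeta (1 + x + Complex.I * t)‖
  have double : ‖riemannZeta (1 + x + 2 * Complex.I * t)‖ ≤ K * (2 * (1 + |t|) ^ ε) :=
    calc ‖riemannZeta (1 + x + 2 * Complex.I * t)‖ ≤ K * (1 + 2 * |t|) ^ ε := by
          simpa [abs_mul] using (zeta_le (1 + x + 2 * Complex.I * t) (by simpa using hx0)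
            (by simp; linarith [hx.2]) (by simp [abs_mul]; linarith)).1
      _ ≤ K * (2 * (1 + |t|)) ^ ε := by gcongr; linarith
      _ ≤ K * (2 * (1 + |t|) ^ ε) := by
          rw [mul_rpow zero_le_two (by positivity)]
          gcongr
          exact rpow_le_self_of_one_le one_le_two hε1
  have product : 1 ≤ (K₀ / x) ^ 3 * W ^ 4 * (K * (2 * (1 + |t|) ^ ε)) :=
    (one_le_norm_riemannZeta_product hx0 t).trans (by gcongr; exact zeta_real_le x hx)
  calc x ^ 3 ≤ x ^ 3 * ((K₀ / x) ^ 3 * W ^ 4 * (K * (2 * (1 + |t|) ^ ε))) :=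
        le_mul_of_one_le_right (by positivity) product
    _ = K₀ ^ 3 * (K * 2) * (1 + |t|) ^ ε * W ^ 4 := by field_simp

lemma exists_le_norm_riemannZeta {δ : ℝ} (hδ : 0 < δ) (hδ1 : δ ≤ 1) :
    ∃ c : ℝ, 0 < c ∧ ∀ x ∈ Set.Ioc (0 : ℝ) 1, ∀ t : ℝ, 1 ≤ |t| →
      c * (1 + |t|) ^ (-δ) ≤ ‖riemannZeta (1 + x + Complex.I * t)‖ := by
  have hε : 0 < δ / 7 := by positivity
  obtain ⟨K, hK, zeta_le⟩ := exists_norm_riemannZeta_and_deriv_le hε (by linarith)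
  obtain ⟨K', cube_le⟩ := exists_cube_le_mul_norm_riemannZeta_pow_four hε (by linarith)
  refine ⟨1 / (16 * max K K' ^ 7), by positivity, fun x hx t ht ↦ ?_⟩
  have hT : 1 ≤ (1 + |t|) ^ (δ / 7) := one_le_rpow (by linarith) hε.le
  have lower := one_div_le_of_cube_le_mul_pow_four (M := max K K' * (1 + |t|) ^ (δ / 7))
    (W := fun x ↦ ‖riemannZeta (1 + x + Complex.I * t)‖)
    (one_le_mul_of_one_le_of_one_le (hK.trans (le_max_left _ _)) hT) (fun _ ↦ norm_nonneg _)
    (fun x hx ↦ (cube_le x hx t ht).trans (by gcongr; exact le_max_right _ _))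
    (fun x hx y hy ↦ abs_norm_riemannZeta_sub_le_of_norm_deriv_le (fun u hu ↦ ?_) hx hy) hx
  · convert! lower using 1
    rw [mul_pow, ← rpow_natCast (_ ^ (δ / 7)), ← rpow_mul (by positivity),
      rpow_neg (by positivity)]
    field_simp
    norm_num
  · calc ‖deriv riemannZeta (1 + u + Complex.I * t)‖ ≤ K * (1 + |t|) ^ (δ / 7) := by
          simpa using (zeta_le (1 + u + Complex.I * t) (by simpa using hu.1)
            (by simp; linarith [hu.2]) (by simpa using ht)).2
      _ ≤ max K K' * (1 + |t|) ^ (δ / 7) := by gcongr; exact le_max_left _ _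

end ZetaLowerBound

section DerivInv

lemma riemannZeta₁_eq_sub_mul {s : ℂ} (hs : s ≠ 1) :
    riemannZeta₁ s = (s - 1) * riemannZeta s := by
  rw [riemannZeta_eq_inv_sub_mul hs, mul_inv_cancel_left₀ (sub_ne_zero.2 hs)]

lemma deriv_riemannZeta₁ {s : ℂ} (hs : s ≠ 1) :
    deriv riemannZeta₁ s = riemannZeta s + (s - 1) * deriv riemannZeta s := by
  have := sub_ne_zero.2 hs
  rw [deriv_riemannZeta_eq_neg_inv_sub_sq_mul_add hs, riemannZeta_eq_inv_sub_mul hs]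
  field_simp
  ring

lemma riemannZeta₁_ne_zero_of_one_le_re {s : ℂ} (hs : 1 ≤ s.re) : riemannZeta₁ s ≠ 0 := by
  rcases eq_or_ne s 1 with rfl | h
  · simp
  · rw [riemannZeta₁_eq_sub_mul h]
    exact mul_ne_zero (sub_ne_zero.2 h) (riemannZeta_ne_zero_of_one_le_re hs)

lemma exists_norm_deriv_div_sq_riemannZeta₁_le_of_abs_le_one :
    ∃ K : ℝ, ∀ x ∈ Set.Ioc (0 : ℝ) 1, ∀ t : ℝ, |t| ≤ 1 →
      ‖deriv riemannZeta₁ (1 + x + Complex.I * t) / riemannZeta₁ (1 + x + Complex.I * t) ^ 2‖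
        ≤ K := by
  have line : Continuous fun p : ℝ × ℝ ↦ (1 : ℂ) + p.1 + Complex.I * p.2 := by fun_prop
  have deriv_cont : Continuous (deriv riemannZeta₁) :=
    differentiable_riemannZeta₁.deriv.continuous
  have zeta_cont := differentiable_riemannZeta₁.continuous
  obtain ⟨K, hK⟩ := ((isCompact_Icc (a := (0 : ℝ)) (b := 1)).prod
    (isCompact_Icc (a := (-1 : ℝ)) (b := 1))).exists_bound_of_continuousOn
    (f := fun p ↦ deriv riemannZeta₁ (1 + p.1 + Complex.I * p.2) /
      riemannZeta₁ (1 + p.1 + Complex.I * p.2) ^ 2)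
    ((deriv_cont.comp line).continuousOn.div ((zeta_cont.comp line).pow 2).continuousOn
      fun p hp ↦ pow_ne_zero _ (riemannZeta₁_ne_zero_of_one_le_re (by simpa using hp.1.1)))
  exact ⟨K, fun x hx t ht ↦ hK (x, t) ⟨Set.Ioc_subset_Icc_self hx, abs_le.1 ht⟩⟩

lemma norm_deriv_div_sq_riemannZeta₁_le {s : ℂ} {A c : ℝ} (hc : 0 < c) (hi : 1 ≤ |s.im|)
    (hζ : ‖riemannZeta s‖ ≤ A) (hζ' : ‖deriv riemannZeta s‖ ≤ A) (hcζ : c ≤ ‖riemannZeta s‖) :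
    ‖deriv riemannZeta₁ s / riemannZeta₁ s ^ 2‖ ≤ 4 * A / (c ^ 2 * (1 + |s.im|)) := by
  have im_le : |s.im| ≤ ‖s - 1‖ := by simpa using (s - 1).abs_im_le_norm
  have hs : s ≠ 1 := fun h ↦ by simp [h] at hi; linarith
  have hA : 0 ≤ A := (norm_nonneg _).trans hζ
  have hN : 0 < ‖s - 1‖ := by linarith
  have numerator : ‖riemannZeta s + (s - 1) * deriv riemannZeta s‖ ≤ 2 * ‖s - 1‖ * A :=
    calc ‖riemannZeta s + (s - 1) * deriv riemannZeta s‖ ≤ A + ‖s - 1‖ * A := by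
          refine (norm_add_le _ _).trans ?_
          rw [norm_mul]
          gcongr
      _ ≤ 2 * ‖s - 1‖ * A := by nlinarith
  rw [deriv_riemannZeta₁ hs, riemannZeta₁_eq_sub_mul hs, norm_div, norm_pow, norm_mul, mul_pow]
  calc _ ≤ 2 * ‖s - 1‖ * A / (‖s - 1‖ ^ 2 * c ^ 2) := by gcongr
    _ = 4 * A / (c ^ 2 * (2 * ‖s - 1‖)) := by field_simp; ring
    _ ≤ 4 * A / (c ^ 2 * (1 + |s.im|)) := by gcongr; linarith

lemma exists_norm_deriv_div_sq_riemannZeta₁_le {δ : ℝ} (hδ : 0 < δ) (hδ1 : δ ≤ 1) :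
    ∃ K : ℝ, 0 < K ∧ ∀ x ∈ Set.Ioc (0 : ℝ) 1, ∀ t : ℝ,
      ‖deriv riemannZeta₁ (1 + x + Complex.I * t) / riemannZeta₁ (1 + x + Complex.I * t) ^ 2‖
        ≤ K * (1 + |t|) ^ (δ - 1) := by
  obtain ⟨K₀, small⟩ := exists_norm_deriv_div_sq_riemannZeta₁_le_of_abs_le_one
  obtain ⟨K, hK, upper⟩ := exists_norm_riemannZeta_and_deriv_le
    (by positivity : 0 < δ / 3) (by linarith)
  obtain ⟨c, hc, lower⟩ := exists_le_norm_riemannZeta (by positivity : 0 < δ / 3) (by linarith)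
  refine ⟨max (2 * K₀) (4 * K / c ^ 2), by positivity, fun x hx t ↦ ?_⟩
  have hT : 0 < 1 + |t| := by positivity
  rcases le_total |t| 1 with ht | ht
  · have half_le : (1 : ℝ) / 2 ≤ (1 + |t|) ^ (δ - 1) :=
      calc (1 : ℝ) / 2 = 2 ^ (-1 : ℝ) := by rw [rpow_neg_one]; norm_num
        _ ≤ 2 ^ (δ - 1) := rpow_le_rpow_of_exponent_le one_le_two (by linarith)
        _ ≤ (1 + |t|) ^ (δ - 1) := rpow_le_rpow_of_nonpos hT (by linarith) (by linarith)
    have bound := small x hx t ht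
    calc _ ≤ K₀ := bound
      _ = 2 * K₀ * (1 / 2) := by ring
      _ ≤ 2 * K₀ * (1 + |t|) ^ (δ - 1) := by
          have := (norm_nonneg _).trans bound
          gcongr
      _ ≤ _ := by gcongr; exact le_max_left _ _
  · have im_eq : (1 + x + Complex.I * t : ℂ).im = t := by simp
    obtain ⟨hζ, hζ'⟩ := upper (1 + x + Complex.I * t) (by simpa using hx.1)
      (by simp; linarith [hx.2]) (by rwa [im_eq])
    have bound := norm_deriv_div_sq_riemannZeta₁_le (mul_pos hc (rpow_pos_of_pos hT (-(δ / 3))))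
      (by rwa [im_eq]) hζ hζ' (lower x hx t ht)
    rw [im_eq] at bound
    have exponents : (1 + |t|) ^ (δ / 3) / (((1 + |t|) ^ (-(δ / 3))) ^ 2 * (1 + |t|)) =
        (1 + |t|) ^ (δ - 1) := by
      rw [← rpow_natCast (_ ^ (-(δ / 3))), ← rpow_mul hT.le, ← rpow_add_one hT.ne',
        ← rpow_sub hT]
      congr 1
      push_cast
      ring
    calc _ ≤ 4 * (K * (1 + |t|) ^ (δ / 3)) / ((c * (1 + |t|) ^ (-(δ / 3))) ^ 2 * (1 + |t|)) :=
          bound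
      _ = 4 * K / c ^ 2 * ((1 + |t|) ^ (δ / 3) /
            (((1 + |t|) ^ (-(δ / 3))) ^ 2 * (1 + |t|))) := by field_simp
      _ ≤ _ := by rw [exponents]; gcongr; exact le_max_right _ _

end DerivInv

section Plancherel

open FourierTransform SchwartzMap
open scoped ContDiff

variable {E F : Type*} [NormedAddCommGroup E] [InnerProductSpace ℝ E] [FiniteDimensional ℝ E]
  [MeasurableSpace E] [BorelSpace E] [NormedAddCommGroup F] [InnerProductSpace ℂ F]
  [CompleteSpace F]

lemma integral_fourier_smul_eq_of_integrable {f : E → ℂ} {g : E → F} (hf : Integrable f)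
    (hg : Integrable g) : ∫ ξ, 𝓕 f ξ • g ξ = ∫ x, f x • 𝓕 g x := by
  simpa using! VectorFourier.integral_fourierIntegral_smul_eq_flip (L := innerₗ E)
    Real.continuous_fourierChar continuous_inner hf hg

lemma ae_eq_fourierInv_toLp_fourier {g : E → F} (hg : Integrable g) (hg2 : MemLp (𝓕 g) 2) :
    g =ᵐ[volume] (𝓕⁻ (hg2.toLp (𝓕 g)) : Lp F 2 (volume : Measure E)) := by
  refine ae_eq_of_integral_contDiff_smul_eq hg.locallyIntegrable
    ((Lp.memLp _).locallyIntegrable one_le_two) fun φ hφ hφs ↦ ?_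
  set ψ : 𝓢(E, ℂ) := (hφs.comp_left (g := fun r : ℝ ↦ (r : ℂ)) Complex.ofReal_zero).toSchwartzMap
    (Complex.ofRealCLM.contDiff.comp hφ)
  calc ∫ x, ψ x • g x = ∫ x, 𝓕 (𝓕⁻ ψ : 𝓢(E, ℂ)) x • g x := by rw [fourier_fourierInv_eq]
    _ = ∫ ξ, (𝓕⁻ ψ : 𝓢(E, ℂ)) ξ • 𝓕 g ξ := by
        rw [SchwartzMap.fourier_coe]
        exact integral_fourier_smul_eq_of_integrable (𝓕⁻ ψ : 𝓢(E, ℂ)).integrable hg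
    _ = Lp.toTemperedDistribution (hg2.toLp (𝓕 g)) (𝓕⁻ ψ) := by
        rw [Lp.toTemperedDistribution_apply]
        exact integral_congr_ae (hg2.coeFn_toLp.mono fun ξ hξ ↦ by simp only [hξ])
    _ = Lp.toTemperedDistribution (𝓕⁻ (hg2.toLp (𝓕 g))) ψ := by
        rw [← Lp.fourierInv_toTemperedDistribution_eq, TemperedDistribution.fourierInv_apply]
    _ = _ := Lp.toTemperedDistribution_apply _ _

lemma eLpNorm_fourier_eq {g : E → F} (hg : Integrable g) (hg2 : MemLp (𝓕 g) 2) :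
    eLpNorm (𝓕 g) 2 volume = eLpNorm g 2 volume := by
  rw [eLpNorm_congr_ae (ae_eq_fourierInv_toLp_fourier hg hg2), ← Lp.enorm_def,
    ← eLpNorm_congr_ae hg2.coeFn_toLp, ← Lp.enorm_def, ← ofReal_norm, ← ofReal_norm,
    ← Lp.norm_fourier_eq (𝓕⁻ _), fourier_fourierInv_eq]

end Plancherel

section MoebiusSum

lemma sum_mul_fract_eq (f : ArithmeticFunction ℝ) {x : ℝ} (hx : 0 ≤ x) :
    ∑ n ∈ Icc 1 ⌊x⌋₊, f n * Int.fract (x / n) =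
      x * ∑ n ∈ Icc 1 ⌊x⌋₊, f n / n - ∑ n ∈ Icc 1 ⌊x⌋₊, (f * (zeta : ArithmeticFunction ℝ)) n := by
  have floor_div (n : ℕ) : ((⌊x⌋₊ / n : ℕ) : ℝ) = ⌊x / n⌋ := by
    rw [← Nat.floor_div_natCast, natCast_floor_eq_intCast_floor (by positivity)]
  have hyperbola := sum_Ioc_mul_zeta_eq_sum f ⌊x⌋₊
  rw [← Icc_add_one_left_eq_Ioc, zero_add] at hyperbola
  rw [hyperbola, mul_sum, ← sum_sub_distrib]
  refine sum_congr rfl fun n _ ↦ ?_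
  rw [floor_div, Int.fract]
  ring

/-- The summatory function `A(y) = ∑_{n ≤ y} μ(n) / n`. -/
noncomputable def moebiusSum (y : ℝ) : ℝ := ∑ n ∈ Icc 1 ⌊y⌋₊, (moebius n : ℝ) / n

lemma measurable_moebiusSum : Measurable moebiusSum :=
  (measurable_from_top (f := fun N : ℕ ↦ ∑ n ∈ Icc 1 N, (moebius n : ℝ) / n)).comp
    Nat.measurable_floor

lemma norm_moebius_le_one (n : ℕ) : ‖(moebius n : ℝ)‖ ≤ 1 := by
  rw [Real.norm_eq_abs]
  exact_mod_cast abs_moebius_le_one (n := n)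

lemma sum_moebius_mul_fract {x : ℝ} (hx : 1 ≤ x) :
    ∑ n ∈ Icc 1 ⌊x⌋₊, (moebius n : ℝ) * Int.fract (x / n) = x * moebiusSum x - 1 := by
  have h := sum_mul_fract_eq ((moebius : ArithmeticFunction ℤ) : ArithmeticFunction ℝ)
    (zero_le_one.trans hx)
  rw [coe_moebius_mul_coe_zeta] at h
  simpa [one_apply, moebiusSum, hx] using h

lemma abs_moebiusSum_le_one (y : ℝ) : |moebiusSum y| ≤ 1 := by
  rcases lt_or_ge y 1 with hy | hy
  · simp [moebiusSum, Nat.floor_eq_zero.2 hy]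
  have hy0 : 0 < y := by linarith
  have term_le (n : ℕ) : ‖(moebius n : ℝ) * Int.fract (y / n)‖ ≤ Int.fract (y / n) := by
    rw [norm_mul, Real.norm_of_nonneg (Int.fract_nonneg (y / n))]
    exact mul_le_of_le_one_left (Int.fract_nonneg _) (norm_moebius_le_one n)
  have sum_fract_le : ∑ n ∈ Icc 1 ⌊y⌋₊, Int.fract (y / n) ≤ y - 1 := by
    rw [← add_sum_Ioc_eq_sum_Icc (Nat.one_le_floor_iff y |>.2 hy)]
    have tail : ∑ n ∈ Ioc 1 ⌊y⌋₊, Int.fract (y / n) ≤ (⌊y⌋₊ - 1 : ℕ) := by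
      simpa using sum_le_card_nsmul (Ioc 1 ⌊y⌋₊) (fun n : ℕ ↦ Int.fract (y / n)) 1
        fun n _ ↦ (Int.fract_lt_one _).le
    rw [Nat.cast_sub (Nat.one_le_floor_iff y |>.2 hy)] at tail
    rw [Nat.cast_one, div_one, ← Int.self_sub_floor, ← natCast_floor_eq_intCast_floor hy0.le]
    push_cast at tail
    linarith
  have main := (norm_sum_le _ _).trans ((sum_le_sum fun n _ ↦ term_le n).trans sum_fract_le)
  rw [sum_moebius_mul_fract hy, Real.norm_eq_abs, abs_le] at main
  rw [abs_le]
  constructor <;> nlinarith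

lemma abs_moebiusSum_sub_le {y z : ℝ} (hy : 0 < y) (hyz : y ≤ z) :
    |moebiusSum z - moebiusSum y| ≤ (z - y + 1) / y := by
  have hfloor : ⌊y⌋₊ ≤ ⌊z⌋₊ := Nat.floor_mono hyz
  have hsub : moebiusSum z - moebiusSum y = ∑ n ∈ Ioc ⌊y⌋₊ ⌊z⌋₊, (moebius n : ℝ) / n := by
    rw [moebiusSum, moebiusSum, sub_eq_iff_eq_add', ← zero_add 1, Icc_add_one_left_eq_Ioc,
      Icc_add_one_left_eq_Ioc, sum_Ioc_consecutive _ (Nat.zero_le _) hfloor]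
  have term_le (n : ℕ) (hn : n ∈ Ioc ⌊y⌋₊ ⌊z⌋₊) : ‖(moebius n : ℝ) / n‖ ≤ 1 / y := by
    have : y ≤ n := (Nat.lt_of_floor_lt (mem_Ioc.1 hn).1).le
    rw [norm_div, Real.norm_natCast]
    gcongr
    exact norm_moebius_le_one n
  calc |moebiusSum z - moebiusSum y| ≤ (⌊z⌋₊ - ⌊y⌋₊ : ℕ) * (1 / y) := by
        rw [hsub]
        simpa using norm_sum_le_of_le _ term_le |>.trans_eq (sum_const _)
    _ ≤ (z - y + 1) * (1 / y) := by
        rw [Nat.cast_sub hfloor]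
        gcongr
        linarith [Nat.floor_le (hy.le.trans hyz), Nat.lt_floor_add_one y]
    _ = (z - y + 1) / y := mul_one_div _ _

lemma integral_moebiusSum_mul_cpow {s : ℂ} (hs : 0 < s.re) :
    ∫ t in Set.Ioi (1 : ℝ), (moebiusSum t : ℂ) * (t : ℂ) ^ (-(s + 1)) =
      (riemannZeta₁ (1 + s))⁻¹ := by
  set f : ℕ → ℂ := fun n ↦ (moebius n : ℂ) / n with hf
  have one_lt_re : 1 < (s + 1).re := by simpa using hs
  have term_eq : LSeries.term f s = LSeries.term (fun n ↦ (moebius n : ℂ)) (s + 1) := by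
    ext n
    rcases eq_or_ne n 0 with rfl | hn
    · simp
    rw [LSeries.term_of_ne_zero hn, LSeries.term_of_ne_zero hn,
      Complex.cpow_add _ _ (Nat.cast_ne_zero.2 hn), Complex.cpow_one, hf, div_div, mul_comm]
  have summable : LSeriesSummable f s := by
    rw [LSeriesSummable, term_eq]
    exact LSeriesSummable_moebius_iff.2 one_lt_re
  have partial_sum (t : ℝ) : ∑ k ∈ Icc 1 ⌊t⌋₊, f k = (moebiusSum t : ℂ) := by
    simp [moebiusSum, hf]
  have bounded : (fun n : ℕ ↦ ∑ k ∈ Icc 1 n, f k) =O[atTop] fun n : ℕ ↦ (n : ℝ) ^ (0 : ℝ) := by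
    refine Asymptotics.IsBigO.of_bound 1 (Eventually.of_forall fun n ↦ ?_)
    rw [show ∑ k ∈ Icc 1 n, f k = (moebiusSum n : ℂ) by simp [← partial_sum], Complex.norm_real]
    simpa using abs_moebiusSum_le_one n
  have laplace := LSeries_eq_mul_integral f le_rfl hs summable bounded
  have product := LSeries_zeta_mul_Lseries_moebius one_lt_re
  rw [LSeries_zeta_eq_riemannZeta one_lt_re,
    show LSeries (fun n ↦ (moebius n : ℂ)) (s + 1) = LSeries f s by rw [LSeries, LSeries, term_eq],
    laplace] at product
  have hs0 : s ≠ 0 := fun h ↦ by simp [h] at hs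
  simp only [partial_sum] at product
  rw [riemannZeta₁_eq_sub_mul (by simpa using hs0), add_sub_cancel_left, add_comm 1 s]
  refine eq_inv_of_mul_eq_one_left ?_
  linear_combination product

lemma integral_moebiusSum_exp_mul_exp {s : ℂ} (hs : 0 < s.re) :
    ∫ u in Set.Ioi (0 : ℝ), (moebiusSum (exp u) : ℂ) * Complex.exp (-(s * u)) =
      (riemannZeta₁ (1 + s))⁻¹ := by
  have image_exp : exp '' Set.Ioi 0 = Set.Ioi 1 := by simp
  rw [← integral_moebiusSum_mul_cpow hs, ← image_exp,
    integral_image_eq_integral_abs_deriv_smul measurableSet_Ioi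
      (fun x _ ↦ (hasDerivAt_exp x).hasDerivWithinAt) exp_injective.injOn]
  refine setIntegral_congr_fun measurableSet_Ioi fun u _ ↦ ?_
  simp only [abs_exp, Complex.real_smul, Complex.ofReal_exp]
  rw [Complex.cpow_def_of_ne_zero (Complex.exp_ne_zero _), ← Complex.ofReal_exp,
    ← Complex.ofReal_log (exp_pos u).le, log_exp, mul_left_comm, Complex.ofReal_exp,
    ← Complex.exp_add]
  congr 2
  ring

end MoebiusSum

section SquareIntegrability

open FourierTransform

/-- The function `u ↦ A(e^u) e^{-σu}` on `u > 0`, extended by zero; its Fourier transform samples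
`1 / ((s - 1) ζ(s))` on the line `Re s = 1 + σ`. -/
noncomputable def dampedMoebiusSum (σ : ℝ) : ℝ → ℂ :=
  (Set.Ioi 0).indicator fun u ↦ ((moebiusSum (exp u) * exp (-(σ * u)) : ℝ) : ℂ)

lemma measurable_dampedMoebiusSum (σ : ℝ) : Measurable (dampedMoebiusSum σ) :=
  (Complex.measurable_ofReal.comp ((measurable_moebiusSum.comp measurable_exp).mul
    (by fun_prop))).indicator measurableSet_Ioi

lemma norm_dampedMoebiusSum_le (σ u : ℝ) :
    ‖dampedMoebiusSum σ u‖ ≤ (Set.Ioi 0).indicator (fun u ↦ exp (-(σ * u))) u := by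
  rw [dampedMoebiusSum, norm_indicator_eq_indicator_norm]
  refine Set.indicator_le_indicator ?_
  rw [Complex.norm_real, norm_mul, Real.norm_of_nonneg (exp_pos _).le]
  exact mul_le_of_le_one_left (exp_pos _).le (abs_moebiusSum_le_one _)

lemma integrable_pow_mul_dampedMoebiusSum {σ : ℝ} (hσ : 0 < σ) (k : ℕ) :
    Integrable fun u : ℝ ↦ (u : ℂ) ^ k * dampedMoebiusSum σ u := by
  have dominating : Integrable ((Set.Ioi 0).indicator fun u ↦ u ^ k * exp (-(σ * u))) := by
    rw [integrable_indicator_iff measurableSet_Ioi]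
    simpa using! integrableOn_rpow_mul_exp_neg_mul_rpow
      (neg_one_lt_zero.trans_le k.cast_nonneg) one_pos hσ
  refine dominating.mono' (by
    have := measurable_dampedMoebiusSum σ
    fun_prop) (Eventually.of_forall fun u ↦ ?_)
  rw [norm_mul]
  by_cases hu : u ∈ Set.Ioi (0 : ℝ)
  · simpa [Set.indicator_of_mem hu, abs_of_pos (Set.mem_Ioi.1 hu)] using
      mul_le_mul_of_nonneg_left (norm_dampedMoebiusSum_le σ u) (pow_nonneg (Set.mem_Ioi.1 hu).le k)
  · simp [dampedMoebiusSum, Set.indicator_of_notMem hu]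

lemma fourier_dampedMoebiusSum {σ : ℝ} (hσ : 0 < σ) (ξ : ℝ) :
    𝓕 (dampedMoebiusSum σ) ξ =
      (riemannZeta₁ (1 + σ + Complex.I * (2 * π * ξ : ℝ)))⁻¹ := by
  rw [add_assoc, ← integral_moebiusSum_exp_mul_exp (by simpa using hσ),
    Real.fourier_real_eq_integral_exp_smul, ← integral_indicator measurableSet_Ioi]
  congr 1
  ext u
  by_cases hu : u ∈ Set.Ioi (0 : ℝ)
  · rw [dampedMoebiusSum, Set.indicator_of_mem hu, Set.indicator_of_mem hu]
    push_cast
    rw [smul_eq_mul, mul_left_comm, ← Complex.exp_add]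
    congr 2
    ring
  · simp [dampedMoebiusSum, Set.indicator_of_notMem hu]

lemma fourier_mul_dampedMoebiusSum {σ : ℝ} (hσ : 0 < σ) (ξ : ℝ) :
    𝓕 (fun u : ℝ ↦ (u : ℂ) * dampedMoebiusSum σ u) ξ =
      deriv riemannZeta₁ (1 + σ + Complex.I * (2 * π * ξ : ℝ)) /
        riemannZeta₁ (1 + σ + Complex.I * (2 * π * ξ : ℝ)) ^ 2 := by
  have deriv_fourier := Real.hasDerivAt_fourier
    (by simpa using integrable_pow_mul_dampedMoebiusSum hσ 0)
    (by simpa using integrable_pow_mul_dampedMoebiusSum hσ 1) ξ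
  rw [show 𝓕 (dampedMoebiusSum σ) = _ from funext (fourier_dampedMoebiusSum hσ)] at deriv_fourier
  have deriv_line : HasDerivAt (fun ξ : ℝ ↦ (1 + σ + Complex.I * (2 * π * ξ : ℝ) : ℂ))
      (Complex.I * (2 * π)) ξ := by
    simpa using ((((hasDerivAt_id ξ).const_mul (2 * π)).ofReal_comp).const_mul
      Complex.I).const_add (1 + σ : ℂ)
  have deriv_inv := ((differentiable_riemannZeta₁ _).hasDerivAt.scomp ξ deriv_line).inv
    (riemannZeta₁_ne_zero_of_one_le_re (by simpa using hσ.le))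
  have const_smul : 𝓕 (fun u : ℝ ↦ (-2 * π * Complex.I * u) • dampedMoebiusSum σ u) ξ =
      -2 * π * Complex.I * 𝓕 (fun u : ℝ ↦ (u : ℂ) * dampedMoebiusSum σ u) ξ := by
    simp only [Real.fourier_real_eq_integral_exp_smul, ← integral_const_mul, smul_eq_mul]
    congr 1
    ext u
    ring
  have derivs_eq := const_smul.symm.trans (deriv_fourier.unique deriv_inv)
  refine mul_left_cancel₀ (by simp [pi_ne_zero] : (-2 * π * Complex.I : ℂ) ≠ 0)
    (derivs_eq.trans ?_)
  simp only [Function.comp, smul_eq_mul]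
  ring

lemma exists_eLpNorm_mul_dampedMoebiusSum_le :
    ∃ M : ENNReal, M ≠ ⊤ ∧ ∀ σ ∈ Set.Ioc (0 : ℝ) 1,
      eLpNorm (fun u : ℝ ↦ (u : ℂ) * dampedMoebiusSum σ u) 2 ≤ M := by
  obtain ⟨K, hK, bound⟩ := exists_norm_deriv_div_sq_riemannZeta₁_le
    (by norm_num : (0 : ℝ) < 1 / 4) (by norm_num)
  have memLp_bound : MemLp (fun ξ : ℝ ↦ K * (1 + ‖ξ‖) ^ (-(3 / 4) : ℝ)) 2 := by
    refine MemLp.const_mul ?_ K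
    rw [memLp_two_iff_integrable_sq (Measurable.aestronglyMeasurable (by fun_prop))]
    have := integrable_one_add_norm (E := ℝ) (μ := volume) (r := 3 / 2) (by norm_num)
    refine this.congr (Eventually.of_forall fun ξ ↦ ?_)
    simp only [← rpow_natCast, ← rpow_mul (by positivity : 0 ≤ 1 + ‖ξ‖)]
    norm_num
  have fourier_le (σ : ℝ) (hσ : σ ∈ Set.Ioc (0 : ℝ) 1) (ξ : ℝ) :
      ‖𝓕 (fun u : ℝ ↦ (u : ℂ) * dampedMoebiusSum σ u) ξ‖ ≤ K * (1 + ‖ξ‖) ^ (-(3 / 4) : ℝ) := by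
    have dilate : ‖ξ‖ ≤ |2 * π * ξ| := by
      rw [abs_mul, abs_of_pos two_pi_pos]
      exact le_mul_of_one_le_left (abs_nonneg ξ) (by linarith [pi_gt_three])
    rw [fourier_mul_dampedMoebiusSum hσ.1]
    calc _ ≤ K * (1 + |2 * π * ξ|) ^ ((1 / 4 : ℝ) - 1) := bound σ hσ _
      _ ≤ K * (1 + ‖ξ‖) ^ (-(3 / 4) : ℝ) := by
          rw [show (1 / 4 : ℝ) - 1 = -(3 / 4) by norm_num]
          gcongr K * ?_
          exact rpow_le_rpow_of_nonpos (by positivity) (by linarith) (by norm_num)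
  refine ⟨_, memLp_bound.eLpNorm_ne_top, fun σ hσ ↦ ?_⟩
  have integrable : Integrable fun u : ℝ ↦ (u : ℂ) * dampedMoebiusSum σ u := by
    simpa using integrable_pow_mul_dampedMoebiusSum hσ.1 1
  rw [← eLpNorm_fourier_eq integrable (memLp_bound.mono'
    (VectorFourier.fourierIntegral_continuous Real.continuous_fourierChar
      (L := innerₗ ℝ) continuous_inner integrable).aestronglyMeasurable
        (Eventually.of_forall (fourier_le σ hσ)))]
  exact eLpNorm_mono_real (fourier_le σ hσ)

lemma memLp_mul_moebiusSum_exp :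
    MemLp (fun u ↦ u * moebiusSum (exp u)) 2 (volume.restrict (Set.Ioi 0)) := by
  obtain ⟨M, hM, bound⟩ := exists_eLpNorm_mul_dampedMoebiusSum_le
  have meas : Measurable fun u : ℝ ↦ moebiusSum (exp u) :=
    measurable_moebiusSum.comp measurable_exp
  have damped_le (σ : ℝ) (hσ : σ ∈ Set.Ioc (0 : ℝ) 1) :
      eLpNorm (fun u ↦ u * (moebiusSum (exp u) * exp (-(σ * u)))) 2
        (volume.restrict (Set.Ioi 0)) ≤ M := by
    refine le_trans (eLpNorm_congr_norm_ae ?_).le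
      ((eLpNorm_mono_measure _ Measure.restrict_le_self).trans (bound σ hσ))
    refine ae_restrict_of_forall_mem measurableSet_Ioi fun u hu ↦ ?_
    rw [dampedMoebiusSum, Set.indicator_of_mem hu, ← Complex.ofReal_mul, Complex.norm_real]
  have limit_le := Lp.eLpNorm_le_of_ae_tendsto (p := 2) (u := 𝓝[>] 0)
    (f := fun σ u ↦ u * (moebiusSum (exp u) * exp (-(σ * u))))
    (g := fun u ↦ u * moebiusSum (exp u))
    (by filter_upwards [Ioc_mem_nhdsGT one_pos] with σ hσ using damped_le σ hσ)
    (fun σ ↦ Measurable.aestronglyMeasurable (by fun_prop))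
    (Eventually.of_forall fun u ↦ by
      have : Continuous fun σ ↦ u * (moebiusSum (exp u) * exp (-(σ * u))) := by fun_prop
      simpa using (this.tendsto 0).mono_left nhdsWithin_le_nhds)
  exact ⟨Measurable.aestronglyMeasurable (by fun_prop), limit_le.trans_lt hM.lt_top⟩

end SquareIntegrability

section PointwiseBound

lemma abs_moebiusSum_exp_add_sub_le (u : ℝ) {h : ℝ} (hh : 0 ≤ h) (hh1 : h ≤ 1) :
    |moebiusSum (exp (u + h)) - moebiusSum (exp u)| ≤ 2 * h + exp (-u) := by
  have exp_sub_one_le : exp h - 1 ≤ 2 * h := by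
    have := abs_exp_sub_one_le (x := h) (by rwa [abs_of_nonneg hh])
    rw [abs_of_nonneg hh] at this
    exact (le_abs_self _).trans this
  calc _ ≤ (exp (u + h) - exp u + 1) / exp u :=
        abs_moebiusSum_sub_le (exp_pos u) (exp_le_exp.2 (by linarith))
    _ = exp h - 1 + exp (-u) := by rw [exp_add, exp_neg]; field_simp
    _ ≤ 2 * h + exp (-u) := by gcongr

lemma exists_abs_moebiusSum_exp_pow_three_mul_sq_le :
    ∃ C : ℝ, ∀ u, 0 ≤ u → exp (-u) < |moebiusSum (exp u)| / 4 →
      |moebiusSum (exp u)| ^ 3 * u ^ 2 ≤ C := by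
  have integrable : IntegrableOn (fun t ↦ (t * moebiusSum (exp t)) ^ 2) (Set.Ioi 0) :=
    memLp_mul_moebiusSum_exp.integrable_sq
  refine ⟨32 * ∫ t in Set.Ioi 0, (t * moebiusSum (exp t)) ^ 2, fun u hu large ↦ ?_⟩
  set a := |moebiusSum (exp u)|
  have ha : 0 ≤ a / 8 := by positivity
  have ha1 : a ≤ 1 := abs_moebiusSum_le_one _
  have slow (t : ℝ) (ht : t ∈ Set.Ioc u (u + a / 8)) : a / 2 ≤ |moebiusSum (exp t)| := by
    have := abs_moebiusSum_exp_add_sub_le u (sub_nonneg.2 ht.1.le) (by linarith [ht.2])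
    rw [add_sub_cancel] at this
    linarith [ht.2, abs_sub_abs_le_abs_sub (moebiusSum (exp u)) (moebiusSum (exp t)),
      abs_sub_comm (moebiusSum (exp u)) (moebiusSum (exp t))]
  have subset : Set.Ioc u (u + a / 8) ⊆ Set.Ioi 0 := fun t ht ↦ hu.trans_lt ht.1
  have lower : (u * (a / 2)) ^ 2 * (a / 8) ≤
      ∫ t in Set.Ioc u (u + a / 8), (t * moebiusSum (exp t)) ^ 2 := by
    have const_le (t : ℝ) (ht : t ∈ Set.Ioc u (u + a / 8)) :
        (u * (a / 2)) ^ 2 ≤ (t * moebiusSum (exp t)) ^ 2 := by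
      rw [← sq_abs (t * _), abs_mul, abs_of_pos (subset ht)]
      gcongr
      exacts [(subset ht).le, ht.1.le, slow t ht]
    simpa [max_eq_left ha] using setIntegral_ge_of_const_le_real measurableSet_Ioc
      (by simp) const_le (integrable.mono_set subset)
  have upper := setIntegral_mono_set integrable
    (Eventually.of_forall fun t ↦ sq_nonneg _) subset.eventuallyLE
  linarith

lemma exists_abs_moebiusSum_le :
    ∃ K : ℝ, 0 < K ∧ ∀ y, 1 ≤ y → |moebiusSum y| ≤ K * (1 + Real.log y) ^ (-(2 / 3) : ℝ) := by
  obtain ⟨C, bound⟩ := exists_abs_moebiusSum_exp_pow_three_mul_sq_le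
  have cubic (u : ℝ) (hu : 0 ≤ u) :
      |moebiusSum (exp u)| ^ 3 * (1 + u) ^ 2 ≤ max 64 (2 + 2 * C) := by
    have ha1 := abs_moebiusSum_le_one (exp u)
    set a := |moebiusSum (exp u)|
    have ha : 0 ≤ a := abs_nonneg _
    rcases lt_or_ge (exp (-u)) (a / 4) with large | small
    · calc a ^ 3 * (1 + u) ^ 2 ≤ a ^ 3 * (2 + 2 * u ^ 2) := by
            gcongr; nlinarith [sq_nonneg (1 - u)]
        _ = 2 * a ^ 3 + 2 * (a ^ 3 * u ^ 2) := by ring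
        _ ≤ 2 + 2 * C := by linarith [bound u hu large, pow_le_one₀ (n := 3) ha ha1]
        _ ≤ _ := le_max_right _ _
    · calc a ^ 3 * (1 + u) ^ 2 = a * (a * (1 + u)) ^ 2 := by ring
        _ ≤ 1 * (4 * exp (-u) * exp u) ^ 2 := by
            gcongr
            exacts [by linarith, by linarith [add_one_le_exp u]]
        _ ≤ 64 := by rw [mul_assoc, ← exp_add]; norm_num
        _ ≤ _ := le_max_left _ _
  refine ⟨max 64 (2 + 2 * C) ^ (1 / 3 : ℝ), by positivity, fun y hy ↦ ?_⟩
  have hL : 0 < 1 + Real.log y := by linarith [log_nonneg hy]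
  have main := cubic (Real.log y) (log_nonneg hy)
  rw [exp_log (by linarith), ← le_div_iff₀ (by positivity)] at main
  calc |moebiusSum y| = (|moebiusSum y| ^ 3) ^ (1 / 3 : ℝ) := by
        rw [← rpow_natCast, ← rpow_mul (abs_nonneg _)]; norm_num
    _ ≤ (max 64 (2 + 2 * C) / (1 + Real.log y) ^ 2) ^ (1 / 3 : ℝ) := by gcongr
    _ = _ := by
        rw [div_eq_mul_inv, mul_rpow (by positivity) (by positivity), ← rpow_natCast,
          ← rpow_neg hL.le, ← rpow_mul hL.le]
        norm_num

end PointwiseBound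

section PrimePowers

lemma sum_powerset_neg_one_pow_card_mul_card {α R : Type*} [CommRing R] (s : Finset α) :
    ∑ t ∈ s.powerset, (-1 : R) ^ #t * #t = if #s = 1 then -1 else 0 := by
  classical
  induction s using Finset.induction_on with
  | empty => simp
  | insert a s ha _ =>
    have sum_insert_sub (t) (ht : t ∈ s.powerset) : (-1 : R) ^ #(insert a t) * #(insert a t) =
        -((-1) ^ #t * #t) - (-1) ^ #t := by
      rw [card_insert_of_notMem fun h ↦ ha (mem_powerset.1 ht h)]
      push_cast
      ring
    have alternating : ∑ t ∈ s.powerset, (-1 : R) ^ #t = if s = ∅ then 1 else 0 := by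
      exact_mod_cast congrArg (Int.cast : ℤ → R) (sum_powerset_neg_one_pow_card (x := s))
    rw [sum_powerset_insert ha, sum_congr rfl sum_insert_sub, sum_sub_distrib, sum_neg_distrib,
      alternating, card_insert_of_notMem ha]
    simp only [Nat.add_eq_right, card_eq_zero]
    split_ifs <;> ring

/-- The arithmetic function `μ ω`. -/
noncomputable def moebiusOmega : ArithmeticFunction ℝ :=
  ⟨fun n ↦ (moebius n : ℝ) * (n.primeFactors.card : ℝ), by simp⟩

lemma moebiusOmega_apply (n : ℕ) :
    moebiusOmega n = (moebius n : ℝ) * (n.primeFactors.card : ℝ) := rfl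

/-- The indicator function of the prime powers `p ^ k`, `k ≥ 1`. -/
noncomputable def primePowIndicator : ArithmeticFunction ℝ :=
  ⟨fun n ↦ if IsPrimePow n then 1 else 0, if_neg not_isPrimePow_zero⟩

lemma primePowIndicator_apply (n : ℕ) :
    primePowIndicator n = if IsPrimePow n then 1 else 0 := rfl

/-- The prime powers `q ≤ x`. -/
noncomputable def primePowsLE (x : ℝ) : Finset ℕ := {q ∈ Icc 1 ⌊x⌋₊ | IsPrimePow q}

lemma mem_primePowsLE {x : ℝ} {q : ℕ} : q ∈ primePowsLE x ↔ IsPrimePow q ∧ (q : ℝ) ≤ x := by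
  rw [primePowsLE, mem_filter, mem_Icc, and_comm]
  exact and_congr_right fun hq ↦ by rw [Nat.le_floor_iff' hq.ne_zero, and_iff_right hq.one_lt.le]

lemma moebiusOmega_prod_of_prime {s : Finset ℕ} (hs : ∀ p ∈ s, p.Prime) :
    moebiusOmega (∏ p ∈ s, p) = (-1) ^ #s * #s := by
  rw [moebiusOmega_apply, Nat.primeFactors_prod hs,
    isMultiplicative_moebius.map_prod_of_prime s hs,
    prod_congr rfl fun p hp ↦ moebius_apply_prime (hs p hp), prod_const]
  simp

lemma sum_divisors_moebiusOmega {n : ℕ} (hn : n ≠ 0) :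
    ∑ d ∈ n.divisors, moebiusOmega d = -primePowIndicator n := by
  have only_squarefree :
      ∑ d ∈ n.divisors with Squarefree d, moebiusOmega d = ∑ d ∈ n.divisors, moebiusOmega d :=
    sum_filter_of_ne fun d _ hd ↦ by
      contrapose! hd
      simp [moebiusOmega_apply, moebius_eq_zero_of_not_squarefree hd]
  have toFinset_factors :
      (UniqueFactorizationMonoid.normalizedFactors n).toFinset = n.primeFactors := by
    rw [Nat.factors_eq, List.toFinset_coe, Nat.toFinset_factors]
  rw [← only_squarefree, Nat.sum_divisors_filter_squarefree hn, toFinset_factors]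
  calc ∑ s ∈ n.primeFactors.powerset, moebiusOmega s.val.prod
      = ∑ s ∈ n.primeFactors.powerset, (-1) ^ #s * (#s : ℝ) := by
        refine sum_congr rfl fun s hs ↦ ?_
        rw [prod_val, ← moebiusOmega_prod_of_prime fun p hp ↦
          Nat.prime_of_mem_primeFactors (mem_powerset.1 hs hp)]
        rfl
    _ = -primePowIndicator n := by
        rw [sum_powerset_neg_one_pow_card_mul_card, primePowIndicator_apply]
        simp only [isPrimePow_iff_card_primeFactors_eq_one]
        split_ifs <;> simp

lemma moebiusOmega_mul_zeta :
    moebiusOmega * (zeta : ArithmeticFunction ℝ) = -primePowIndicator := by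
  ext n
  rcases eq_or_ne n 0 with rfl | hn
  · simp
  · rw [coe_mul_zeta_apply, sum_divisors_moebiusOmega hn, ArithmeticFunction.neg_apply]

lemma moebiusOmega_eq_neg_mul :
    moebiusOmega = -primePowIndicator * (moebius : ArithmeticFunction ℝ) := by
  rw [← moebiusOmega_mul_zeta, mul_assoc, coe_zeta_mul_coe_moebius, mul_one]

lemma sum_mul_div (f g : ArithmeticFunction ℝ) (N : ℕ) :
    ∑ n ∈ Icc 1 N, (f * g) n / n =
      ∑ n ∈ Icc 1 N, f n / n * ∑ m ∈ Icc 1 (N / n), g m / m := by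
  let I : ArithmeticFunction ℝ := (ArithmeticFunction.id : ArithmeticFunction ℕ)
  have mul_pdiv (n : ℕ) : (f.pdiv I * g.pdiv I) n = (f * g) n / n := by
    rw [mul_apply, mul_apply, sum_div]
    refine sum_congr rfl fun p hp ↦ ?_
    rw [← (Nat.mem_divisorsAntidiagonal.1 hp).1]
    simp [I, pdiv_apply, div_mul_div_comm]
  have hyperbola := sum_Ioc_mul_eq_sum_sum (f.pdiv I) (g.pdiv I) N
  simpa [mul_pdiv, I, pdiv_apply, ← Icc_add_one_left_eq_Ioc] using hyperbola

lemma sum_moebiusOmega_div (x : ℝ) :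
    ∑ n ∈ Icc 1 ⌊x⌋₊, moebiusOmega n / n =
      -∑ q ∈ primePowsLE x, moebiusSum (x / q) / q := by
  rw [moebiusOmega_eq_neg_mul, sum_mul_div, primePowsLE, sum_filter, ← sum_neg_distrib]
  refine sum_congr rfl fun q _ ↦ ?_
  rw [ArithmeticFunction.neg_apply, primePowIndicator_apply, moebiusSum, Nat.floor_div_natCast]
  split_ifs <;> simp [div_eq_mul_inv, mul_comm]

lemma sum_moebiusOmega_mul_fract {x : ℝ} (hx : 0 ≤ x) :
    ∑ n ∈ Icc 1 ⌊x⌋₊, moebiusOmega n * Int.fract (x / n) =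
      #(primePowsLE x) -
        x * ∑ q ∈ primePowsLE x, moebiusSum (x / q) / q := by
  rw [sum_mul_fract_eq _ hx, sum_moebiusOmega_div, moebiusOmega_mul_zeta]
  simp only [ArithmeticFunction.neg_apply, primePowIndicator_apply, sum_neg_distrib, sum_boole,
    primePowsLE]
  ring

end PrimePowers

section PrimePowerCount

lemma card_primePow_le_primeCounting_add {x : ℝ} (hx : 1 ≤ x) :
    (#(primePowsLE x) : ℝ) ≤
      Nat.primeCounting ⌊x⌋₊ + √x * (Real.log x / Real.log 2) := by
  set J := ⌊Real.log x / Real.log 2⌋₊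
  have primes : (#{p ∈ Ioc 0 ⌊x ^ (1 / (1 : ℕ) : ℝ)⌋₊ | p.Prime} : ℝ) =
      Nat.primeCounting ⌊x⌋₊ := by
    rw [← Nat.primesLE_card_eq_primeCounting]
    congr 2
    ext p
    simpa [Nat.mem_primesLE] using fun (hp : p.Prime) _ ↦ hp.pos
  have proper_powers (k) (hk : k ∈ Ioc 1 (J + 1)) :
      (#{p ∈ Ioc 0 ⌊x ^ (1 / k : ℝ)⌋₊ | p.Prime} : ℝ) ≤ √x := by
    have two_le : (2 : ℝ) ≤ k := mod_cast (mem_Ioc.1 hk).1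
    calc (#{p ∈ Ioc 0 ⌊x ^ (1 / k : ℝ)⌋₊ | p.Prime} : ℝ)
        ≤ ⌊x ^ (1 / k : ℝ)⌋₊ := by
          exact_mod_cast (card_filter_le _ _).trans_eq (by simp)
      _ ≤ x ^ (1 / k : ℝ) := Nat.floor_le (by positivity)
      _ ≤ x ^ (1 / 2 : ℝ) := by gcongr
      _ = √x := (Real.sqrt_eq_rpow x).symm
  have by_exponent := Chebyshev.sum_PrimePow_eq_sum_sum' (fun _ ↦ (1 : ℝ)) (zero_le_one.trans hx)
    J.le_succ
  simp only [sum_const, nsmul_eq_mul, mul_one] at by_exponent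
  calc (#(primePowsLE x) : ℝ)
      = Nat.primeCounting ⌊x⌋₊ +
          ∑ k ∈ Ioc 1 (J + 1), (#{p ∈ Ioc 0 ⌊x ^ (1 / k : ℝ)⌋₊ | p.Prime} : ℝ) := by
        rw [primePowsLE, ← zero_add 1, Icc_add_one_left_eq_Ioc, by_exponent, Nat.succ_eq_add_one,
          ← add_sum_Ioc_eq_sum_Icc (by lia), primes]
    _ ≤ Nat.primeCounting ⌊x⌋₊ + J * √x := by
        gcongr
        simpa using sum_le_card_nsmul _ _ _ proper_powers
    _ ≤ Nat.primeCounting ⌊x⌋₊ + √x * (Real.log x / Real.log 2) := by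
        rw [mul_comm]
        gcongr
        exact Nat.floor_le (div_nonneg (log_nonneg hx) (log_nonneg one_le_two))

lemma log_add_log_sq_le_mul_sqrt {x : ℝ} (hx : 1 ≤ x) :
    Real.log x + Real.log x ^ 2 ≤ 8 * √x := by
  have h := quadratic_le_exp_of_nonneg (log_nonneg (Real.one_le_sqrt.2 hx))
  rw [Real.exp_log (Real.sqrt_pos.2 (zero_lt_one.trans_le hx)),
    Real.log_sqrt (zero_le_one.trans hx)] at h
  linarith [log_nonneg hx]

lemma primeCounting_mul_log_le {x : ℝ} (hx : 1 ≤ x) :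
    Nat.primeCounting ⌊x⌋₊ * Real.log x ≤ 12 * x := by
  rcases hx.eq_or_lt with rfl | hx1
  · simp
  have log_pos : 0 < Real.log x := Real.log_pos hx1
  have log_four : Real.log 4 ≤ 2 := by
    rw [show (4 : ℝ) = 2 ^ 2 by norm_num, Real.log_pow]
    norm_num
    linarith [Real.log_two_lt_d9]
  have log_le : Real.log x ≤ 8 * √x := by
    linarith [log_add_log_sq_le_mul_sqrt hx, sq_nonneg (Real.log x)]
  calc Nat.primeCounting ⌊x⌋₊ * Real.log x
      ≤ (Real.log 4 * x / Real.log √x + √x) * Real.log x := by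
        gcongr
        exact Chebyshev.pi_le_log4_mul_div hx1
    _ = 2 * Real.log 4 * x + √x * Real.log x := by
        rw [Real.log_sqrt (by linarith)]
        field_simp
    _ ≤ 2 * 2 * x + √x * (8 * √x) := by gcongr
    _ = 12 * x := by
        linear_combination 8 * Real.mul_self_sqrt (zero_le_one.trans hx)

lemma card_primePow_le {x : ℝ} (hx : 1 ≤ x) :
    (#(primePowsLE x) : ℝ) ≤ 29 * x / (1 + Real.log x) := by
  have hlog : 0 ≤ Real.log x := log_nonneg hx
  have log_two : 1 / 2 ≤ Real.log 2 := by linarith [Real.log_two_gt_d9]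
  have card_le : (#(primePowsLE x) : ℝ) ≤ x := by
    refine le_trans ?_ (Nat.floor_le (zero_le_one.trans hx))
    exact_mod_cast (card_filter_le _ _).trans_eq (by simp)
  have log_sq_le : 2 * Real.log x ^ 2 ≤ 16 * √x := by linarith [log_add_log_sq_le_mul_sqrt hx]
  rw [le_div_iff₀ (by positivity)]
  calc (#(primePowsLE x) : ℝ) * (1 + Real.log x)
      ≤ x + (Nat.primeCounting ⌊x⌋₊ + √x * (Real.log x / (1 / 2))) * Real.log x := by
        rw [mul_one_add]
        gcongr
        exact (card_primePow_le_primeCounting_add hx).trans (by gcongr)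
    _ = x + Nat.primeCounting ⌊x⌋₊ * Real.log x + √x * (2 * Real.log x ^ 2) := by ring
    _ ≤ x + 12 * x + √x * (16 * √x) := by
        grw [primeCounting_mul_log_le hx, log_sq_le]
    _ = 29 * x := by linear_combination 16 * Real.mul_self_sqrt (zero_le_one.trans hx)

end PrimePowerCount

section PrimePowerSum

lemma one_div_mul_rpow_neg_le {α a b : ℝ} (hα : α ≤ 1) (ha : 0 < a) (hb : 0 < b) :
    1 / a * b ^ (-α) ≤ (a + b) ^ (-α) * (1 / a + 1 / b) := by
  have split_off_inv {c : ℝ} (hc : 0 < c) : c ^ (-α) = c ^ (1 - α) * (1 / c) := by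
    rw [one_div, ← Real.rpow_neg_one c, ← Real.rpow_add hc]
    ring_nf
  have partial_fractions : 1 / a * (1 / b) = 1 / (a + b) * (1 / a + 1 / b) := by
    field_simp
    ring
  calc 1 / a * b ^ (-α) = b ^ (1 - α) * (1 / a * (1 / b)) := by rw [split_off_inv hb]; ring
    _ ≤ (a + b) ^ (1 - α) * (1 / a * (1 / b)) := by
        gcongr
        linarith
    _ = (a + b) ^ (-α) * (1 / a + 1 / b) := by
        rw [partial_fractions, split_off_inv (add_pos ha hb)]
        ring

lemma sum_one_div_mul_rpow_neg_le {α L : ℝ} {J : ℕ} (hα : α ≤ 1) (hJ : (J : ℝ) ≤ L) :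
    ∑ j ∈ range (J + 1), 1 / (1 + L - j) * (1 + j : ℝ) ^ (-α) ≤
      2 * ((L + 2) ^ (-α) * (1 + Real.log (L + 2))) := by
  have hL : 0 < L + 2 := by linarith [J.cast_nonneg (α := ℝ)]
  have harmonic_le : ∑ j ∈ range (J + 1), 1 / (1 + j : ℝ) ≤ 1 + Real.log (L + 2) := by
    calc ∑ j ∈ range (J + 1), 1 / (1 + j : ℝ) = (harmonic (J + 1) : ℝ) := by
          simp [harmonic, add_comm]
      _ ≤ 1 + Real.log (J + 1 : ℕ) := harmonic_le_one_add_log (J + 1)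
      _ ≤ 1 + Real.log (L + 2) := by
          gcongr
          push_cast
          linarith
  have reflect :
      ∑ j ∈ range (J + 1), 1 / (1 + J - j : ℝ) = ∑ j ∈ range (J + 1), 1 / (1 + j : ℝ) := by
    rw [← sum_range_reflect]
    refine sum_congr rfl fun j hj ↦ ?_
    rw [Nat.add_sub_cancel, Nat.cast_sub (mem_range_succ_iff.1 hj)]
    ring
  calc ∑ j ∈ range (J + 1), 1 / (1 + L - j) * (1 + j : ℝ) ^ (-α)
      ≤ ∑ j ∈ range (J + 1), (L + 2) ^ (-α) * (1 / (1 + J - j) + 1 / (1 + j : ℝ)) := by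
        refine sum_le_sum fun j hj ↦ ?_
        have hjJ : (j : ℝ) ≤ J := mod_cast mem_range_succ_iff.1 hj
        have h := one_div_mul_rpow_neg_le hα (show 0 < 1 + L - j by linarith)
          (show 0 < 1 + (j : ℝ) by positivity)
        rw [show 1 + L - j + (1 + j) = L + 2 by ring] at h
        refine h.trans ?_
        gcongr
        linarith
    _ = (L + 2) ^ (-α) * (2 * ∑ j ∈ range (J + 1), 1 / (1 + j : ℝ)) := by
        rw [← mul_sum, sum_add_distrib, reflect, two_mul]
    _ ≤ (L + 2) ^ (-α) * (2 * (1 + Real.log (L + 2))) := by gcongr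
    _ = 2 * ((L + 2) ^ (-α) * (1 + Real.log (L + 2))) := by ring

/-- The prime powers `q ≤ x` with `e ^ j ≤ x / q < e ^ (j + 1)`. -/
noncomputable def primePowBlock (x : ℝ) (j : ℕ) : Finset ℕ :=
  {q ∈ primePowsLE x | ⌊Real.log (x / q)⌋₊ = j}

lemma log_div_mem_Ico_of_mem_primePowBlock {x : ℝ} {j q : ℕ} (hq : q ∈ primePowBlock x j) :
    Real.log (x / q) ∈ Set.Ico (j : ℝ) (j + 1) := by
  obtain ⟨hqx, rfl⟩ := mem_filter.1 hq
  obtain ⟨hpp, hle⟩ := mem_primePowsLE.1 hqx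
  have hq0 : (0 : ℝ) < q := mod_cast hpp.pos
  exact ⟨Nat.floor_le (log_nonneg ((one_le_div₀ hq0).2 hle)), Nat.lt_floor_add_one _⟩

lemma card_primePowBlock_le {x : ℝ} {j : ℕ} (hx : 0 < x) (hj : j ≤ Real.log x) :
    (#(primePowBlock x j) : ℝ) ≤ 29 * (x * Real.exp (-j)) / (1 + Real.log x - j) := by
  have one_le : 1 ≤ x * Real.exp (-j) := by
    rw [← Real.exp_log hx, ← Real.exp_add]
    exact Real.one_le_exp (by linarith)
  have subset : primePowBlock x j ⊆ primePowsLE (x * Real.exp (-j)) := fun q hq ↦ by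
    have hpp := (mem_primePowsLE.1 (mem_filter.1 hq).1).1
    have hq0 : (0 : ℝ) < q := mod_cast hpp.pos
    refine mem_primePowsLE.2 ⟨hpp, ?_⟩
    have exp_le := (Real.le_log_iff_exp_le (by positivity)).1
      (log_div_mem_Ico_of_mem_primePowBlock hq).1
    rw [Real.exp_neg, ← div_eq_mul_inv]
    exact (le_div_comm₀ (Real.exp_pos _) hq0).1 exp_le
  calc (#(primePowBlock x j) : ℝ) ≤ #(primePowsLE (x * Real.exp (-j))) :=
        Nat.cast_le.2 (card_le_card subset)
    _ ≤ 29 * (x * Real.exp (-j)) / (1 + Real.log (x * Real.exp (-j))) := card_primePow_le one_le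
    _ = 29 * (x * Real.exp (-j)) / (1 + Real.log x - j) := by
        rw [Real.log_mul hx.ne' (Real.exp_ne_zero _), Real.log_exp, ← sub_eq_add_neg, add_sub_assoc]

lemma sum_primePowBlock_le {α x : ℝ} {j : ℕ} (hα : 0 ≤ α) (hx : 0 < x) (hj : j ≤ Real.log x) :
    ∑ q ∈ primePowBlock x j, (1 + Real.log (x / q)) ^ (-α) / q ≤
      29 * Real.exp 1 * (1 / (1 + Real.log x - j) * (1 + j : ℝ) ^ (-α)) := by
  have term_le (q) (hq : q ∈ primePowBlock x j) : (1 + Real.log (x / q)) ^ (-α) / q ≤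
      (1 + j : ℝ) ^ (-α) * (Real.exp (j + 1) / x) := by
    obtain ⟨le_log, log_lt⟩ := log_div_mem_Ico_of_mem_primePowBlock hq
    have hq0 : (0 : ℝ) < q := mod_cast (mem_primePowsLE.1 (mem_filter.1 hq).1).1.pos
    have lt_exp := (Real.log_lt_iff_lt_exp (by positivity)).1 log_lt
    rw [div_eq_mul_inv]
    gcongr ?_ * ?_
    · exact Real.rpow_le_rpow_of_nonpos (by positivity) (by linarith) (neg_nonpos.2 hα)
    · rw [le_div_iff₀ hx, ← div_eq_inv_mul]
      exact lt_exp.le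
  have denom_pos : 0 < 1 + Real.log x - j := by linarith
  calc ∑ q ∈ primePowBlock x j, (1 + Real.log (x / q)) ^ (-α) / q
      ≤ #(primePowBlock x j) * ((1 + j : ℝ) ^ (-α) * (Real.exp (j + 1) / x)) := by
        simpa using sum_le_card_nsmul _ _ _ term_le
    _ ≤ 29 * (x * Real.exp (-j)) / (1 + Real.log x - j) *
          ((1 + j : ℝ) ^ (-α) * (Real.exp (j + 1) / x)) := by
        gcongr
        exact card_primePowBlock_le hx hj
    _ = 29 * Real.exp 1 * (1 / (1 + Real.log x - j) * (1 + j : ℝ) ^ (-α)) := by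
        rw [Real.exp_neg, Real.exp_add]
        field_simp

lemma sum_primePowsLE_le {α x : ℝ} (hα : 0 ≤ α) (hα1 : α ≤ 1) (hx : 1 ≤ x) :
    ∑ q ∈ primePowsLE x, (1 + Real.log (x / q)) ^ (-α) / q ≤
      58 * Real.exp 1 * ((Real.log x + 2) ^ (-α) * (1 + Real.log (Real.log x + 2))) := by
  have hx0 : 0 < x := zero_lt_one.trans_le hx
  set J := ⌊Real.log x⌋₊
  have hJ : (J : ℝ) ≤ Real.log x := Nat.floor_le (log_nonneg hx)
  have floor_mem (q) (hq : q ∈ primePowsLE x) : ⌊Real.log (x / q)⌋₊ ∈ range (J + 1) := by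
    have one_le : (1 : ℝ) ≤ q := mod_cast (mem_primePowsLE.1 hq).1.one_lt.le
    rw [mem_range_succ_iff]
    exact Nat.floor_mono (Real.log_le_log (by positivity) (div_le_self hx0.le one_le))
  calc ∑ q ∈ primePowsLE x, (1 + Real.log (x / q)) ^ (-α) / q
      = ∑ j ∈ range (J + 1), ∑ q ∈ primePowBlock x j, (1 + Real.log (x / q)) ^ (-α) / q :=
        (sum_fiberwise_of_maps_to floor_mem _).symm
    _ ≤ ∑ j ∈ range (J + 1),
          29 * Real.exp 1 * (1 / (1 + Real.log x - j) * (1 + j : ℝ) ^ (-α)) := by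
        refine sum_le_sum fun j hj ↦ sum_primePowBlock_le hα hx0 (hJ.trans' ?_)
        exact_mod_cast mem_range_succ_iff.1 hj
    _ ≤ 29 * Real.exp 1 *
          (2 * ((Real.log x + 2) ^ (-α) * (1 + Real.log (Real.log x + 2)))) := by
        rw [← mul_sum]
        gcongr
        exact sum_one_div_mul_rpow_neg_le hα1 hJ
    _ = 58 * Real.exp 1 * ((Real.log x + 2) ^ (-α) * (1 + Real.log (Real.log x + 2))) := by ring

end PrimePowerSum

section Conclusion

lemma abs_sum_moebiusSum_div_le {K : ℝ} (x : ℝ)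
    (hA : ∀ y, 1 ≤ y → |moebiusSum y| ≤ K * (1 + Real.log y) ^ (-(2 / 3) : ℝ)) :
    |∑ q ∈ primePowsLE x, moebiusSum (x / q) / q| ≤
      K * ∑ q ∈ primePowsLE x, (1 + Real.log (x / q)) ^ (-(2 / 3) : ℝ) / q := by
  rw [mul_sum]
  refine abs_sum_le_sum_abs _ _ |>.trans (sum_le_sum fun q hq ↦ ?_)
  obtain ⟨hpp, hle⟩ := mem_primePowsLE.1 hq
  have hq0 : (0 : ℝ) < q := mod_cast hpp.pos
  rw [abs_div, abs_of_pos hq0, ← mul_div_assoc]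
  gcongr
  exact hA _ ((one_le_div₀ hq0).2 hle)

lemma exists_abs_sum_moebiusOmega_mul_fract_le :
    ∃ C > (0 : ℝ), ∀ x : ℝ, 1 ≤ x → |∑ n ∈ Icc 1 ⌊x⌋₊, moebiusOmega n * Int.fract (x / n)| ≤
      C * x * ((Real.log x + 2) ^ (-(2 / 3) : ℝ) * (1 + Real.log (Real.log x + 2))) := by
  obtain ⟨K, hK, hA⟩ := exists_abs_moebiusSum_le
  refine ⟨58 + K * (58 * Real.exp 1), by positivity, fun x hx ↦ ?_⟩
  have hx0 : 0 < x := zero_lt_one.trans_le hx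
  have hlog : 0 ≤ Real.log x := log_nonneg hx
  set B := (Real.log x + 2) ^ (-(2 / 3) : ℝ) * (1 + Real.log (Real.log x + 2))
  have card_le : (#(primePowsLE x) : ℝ) ≤ 58 * x * B := by
    calc (#(primePowsLE x) : ℝ) ≤ 29 * x / (1 + Real.log x) := card_primePow_le hx
      _ ≤ 29 * x / ((Real.log x + 2) / 2) := by gcongr; linarith
      _ = 58 * x * ((Real.log x + 2) ^ (-1 : ℝ) * 1) := by rw [Real.rpow_neg_one]; field_simp; ring
      _ ≤ 58 * x * B := by
          unfold B
          gcongr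
          · linarith
          · norm_num
          · linarith [log_nonneg (show 1 ≤ Real.log x + 2 by linarith)]
  have sum_le : |∑ q ∈ primePowsLE x, moebiusSum (x / q) / q| ≤ K * (58 * Real.exp 1 * B) := by
    grw [abs_sum_moebiusSum_div_le x hA, sum_primePowsLE_le (by norm_num) (by norm_num) hx]
  rw [sum_moebiusOmega_mul_fract hx0.le]
  calc |(#(primePowsLE x) : ℝ) - x * ∑ q ∈ primePowsLE x, moebiusSum (x / q) / q|
      ≤ #(primePowsLE x) + x * |∑ q ∈ primePowsLE x, moebiusSum (x / q) / q| := by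
        grw [abs_sub, abs_mul, abs_of_pos hx0, Nat.abs_cast]
    _ ≤ 58 * x * B + x * (K * (58 * Real.exp 1 * B)) := by gcongr
    _ = (58 + K * (58 * Real.exp 1)) * x * B := by ring

lemma rpow_neg_two_thirds_mul_one_add_log_le {z : ℝ} (hz : 1 ≤ z) :
    z ^ (-(2 / 3) : ℝ) * (1 + Real.log z) ≤ 7 / √z := by
  have hz0 : 0 < z := zero_lt_one.trans_le hz
  have log_le := Real.log_le_rpow_div hz0.le (show (0 : ℝ) < 1 / 6 by norm_num)
  have one_le := Real.one_le_rpow hz (show (0 : ℝ) ≤ 1 / 6 by norm_num)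
  calc z ^ (-(2 / 3) : ℝ) * (1 + Real.log z)
      ≤ z ^ (-(2 / 3) : ℝ) * (7 * z ^ (1 / 6 : ℝ)) := by gcongr; linarith
    _ = 7 * (z ^ (-(2 / 3) : ℝ) * z ^ (1 / 6 : ℝ)) := by ring
    _ = 7 / √z := by
        rw [Real.sqrt_eq_rpow, div_eq_mul_inv 7, ← Real.rpow_neg hz0.le, ← Real.rpow_add hz0]
        norm_num

lemma one_le_log_log {x : ℝ} (hx : 16 ≤ x) : 1 ≤ Real.log (Real.log x) := by
  have exp_one_le : Real.exp 1 ≤ Real.log x := by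
    calc Real.exp 1 ≤ 4 * Real.log 2 := by linarith [Real.log_two_gt_d9, Real.exp_one_lt_d9]
      _ = Real.log (2 ^ 4) := by rw [Real.log_pow, Nat.cast_ofNat]
      _ ≤ Real.log x := Real.log_le_log (by norm_num) (by linarith)
  exact (Real.le_log_iff_exp_le ((Real.exp_pos 1).trans_le exp_one_le)).2 exp_one_le

end Conclusion

/-- There is a constant `C > 0` such that for all `x ≥ 16`,
`|Σ_{n ≤ x} μ(n) ω(n) {x/n}| ≤ C x √(log log x) / √(log x)`,
where `{y}` denotes the fractional part of `y`. -/
theorem moebius_omega_fract_sum_bound :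
    ∃ C > (0 : ℝ), ∀ x : ℝ, 16 ≤ x →
      |∑ n ∈ Finset.Icc 1 ⌊x⌋₊,
          (moebius n : ℝ) * (n.primeFactors.card : ℝ) * Int.fract (x / n)|
        ≤ C * x * Real.sqrt (Real.log (Real.log x)) / Real.sqrt (Real.log x) := by
  obtain ⟨C, hC, sum_le⟩ := exists_abs_sum_moebiusOmega_mul_fract_le
  refine ⟨7 * C, by positivity, fun x hx ↦ ?_⟩
  have hlog : 0 < Real.log x := Real.log_pos (by linarith)
  calc |∑ n ∈ Icc 1 ⌊x⌋₊, moebiusOmega n * Int.fract (x / n)|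
      ≤ C * x * ((Real.log x + 2) ^ (-(2 / 3) : ℝ) * (1 + Real.log (Real.log x + 2))) :=
        sum_le x (by linarith)
    _ ≤ C * x * (7 / √(Real.log x + 2)) := by
        gcongr
        exact rpow_neg_two_thirds_mul_one_add_log_le (by linarith)
    _ ≤ C * x * (7 * √(Real.log (Real.log x)) / √(Real.log x)) := by
        gcongr
        · exact le_mul_of_one_le_right (by norm_num) (Real.one_le_sqrt.2 (one_le_log_log hx))
        · linarith
    _ = 7 * C * x * √(Real.log (Real.log x)) / √(Real.log x) := by ring
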